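/- Let A be a subhomogeneous C*-algebra. Then for any C*-algebra B, the Banach *-algebra A ⊗̂ B is symmetric. -/

import Mathlib

open scoped TensorProduct
open Pointwise

universe u

noncomputable section

/-- A C⋆-norm on a complex `*`-algebra.  On a matrix algebra over a C⋆-algebra such a
norm is unique, namely the canonical C⋆-norm. -/
structure IsCStarNorm {M : Type*} [NonUnitalRing M] [StarRing M] [Module ℂ M]
    (N : M → ℝ) : Prop where
  add_le : ∀ x y, N (x + y) ≤ N x + N y
  smul_eq : ∀ (c : ℂ) (x : M), N (c • x) = ‖c‖ * N x
  eq_zero_of : ∀ x, N x = 0 → x = 0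
  mul_le : ∀ x y, N (x * y) ≤ N x * N y
  star_mul_self : ∀ x, N (star x * x) = N x * N x

/-- The operator space projective tensor norm `‖·‖_∧` on the algebraic tensor product
`A ⊗ B`, relative to given families of matrix norms on `A` and `B`:
`‖u‖_∧ = inf { ‖α‖ ‖v‖ ‖w‖ ‖β‖ : u = α (v ⊗ w) β }` where `v ∈ M_p(A)`, `w ∈ M_q(B)`,
`α ∈ M_{1,pq}(ℂ)` and `β ∈ M_{pq,1}(ℂ)` (row and column vectors carrying the Euclidean
norm, which is their norm as scalar matrices). -/
noncomputable def osProjNorm {A B : Type u}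
    [AddCommGroup A] [Module ℂ A] [AddCommGroup B] [Module ℂ B]
    (NA : ∀ p : ℕ, Matrix (Fin p) (Fin p) A → ℝ)
    (NB : ∀ q : ℕ, Matrix (Fin q) (Fin q) B → ℝ) (u : A ⊗[ℂ] B) : ℝ :=
  sInf { r : ℝ | ∃ (p q : ℕ) (α : Fin p × Fin q → ℂ) (v : Matrix (Fin p) (Fin p) A)
      (w : Matrix (Fin q) (Fin q) B) (β : Fin p × Fin q → ℂ),
      u = ∑ ik : Fin p × Fin q, ∑ jl : Fin p × Fin q,
            (α ik * β jl) • (v ik.1 jl.1 ⊗ₜ[ℂ] w ik.2 jl.2) ∧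
      r = Real.sqrt (∑ ik, ‖α ik‖ ^ 2) * NA p v * NB q w *
            Real.sqrt (∑ jl, ‖β jl‖ ^ 2) }

/-- `X` is a completion of the algebraic tensor product `A ⊗ B` with respect to the
norm `ν`, via the (necessarily isometric) dense embedding `ι`, and the multiplication and
involution of `X` are the canonical ones induced from `A` and `B`.  Applied with
`ν = osProjNorm NA NB` (for the canonical matrix C⋆-norms `NA`, `NB`) this characterizes
the Banach `*`-algebra `A ⊗̂ B` (the operator space projective tensor product) up to
isometric `*`-isomorphism; applied with `ν = bsProjNorm` it characterizes the Banach
space projective tensor product `A ⊗_γ B`. -/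
structure IsTensorCompletion {A B : Type u} [NonUnitalRing A] [StarRing A] [Module ℂ A]
    [NonUnitalRing B] [StarRing B] [Module ℂ B] (ν : A ⊗[ℂ] B → ℝ)
    (X : Type u) [NonUnitalNormedRing X] [StarRing X] [NormedSpace ℂ X] [CompleteSpace X]
    (ι : A ⊗[ℂ] B →ₗ[ℂ] X) : Prop where
  norm_eq : ∀ u, ‖ι u‖ = ν u
  dense : DenseRange ι
  mul_tmul : ∀ (a c : A) (b d : B),
    ι (a ⊗ₜ[ℂ] b) * ι (c ⊗ₜ[ℂ] d) = ι ((a * c) ⊗ₜ[ℂ] (b * d))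
  star_tmul : ∀ (a : A) (b : B), star (ι (a ⊗ₜ[ℂ] b)) = ι (star a ⊗ₜ[ℂ] star b)

/-- The product ideal `S ⊗̂ T`: the closure in `X` (a completion of `A ⊗ B`) of the span of
elementary tensors `a ⊗ b` with `a ∈ S`, `b ∈ T`. -/
def tensorIdeal {A B : Type u} [NonUnitalRing A] [StarRing A] [Module ℂ A]
    [NonUnitalRing B] [StarRing B] [Module ℂ B]
    {X : Type u} [NonUnitalNormedRing X] [StarRing X] [NormedSpace ℂ X] [CompleteSpace X]
    (ι : A ⊗[ℂ] B →ₗ[ℂ] X) (S : Set A) (T : Set B) : Set X :=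
  closure (ι '' (Submodule.span ℂ (Set.image2 (fun a b => a ⊗ₜ[ℂ] b) S T)))

/-- A closed prime (two-sided) ideal of a Banach algebra: a proper closed two-sided ideal `K`
such that whenever the product of two closed two-sided ideals is contained in `K`, one of them
is contained in `K`. -/
def IsClosedPrimeIdeal {Y : Type u} [NonUnitalNormedRing Y] (K : TwoSidedIdeal Y) : Prop :=
  IsClosed (K : Set Y) ∧ (K : Set Y) ≠ Set.univ ∧
    ∀ I J : TwoSidedIdeal Y, IsClosed (I : Set Y) → IsClosed (J : Set Y) →
      (∀ x ∈ I, ∀ y ∈ J, x * y ∈ K) → (I : Set Y) ⊆ (K : Set Y) ∨ (J : Set Y) ⊆ (K : Set Y)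

/-- An irreducible continuous `*`-representation of a Banach `*`-algebra `Y` on a complex
Hilbert space. -/
structure IrreducibleRepOn (Y : Type u)
    [NonUnitalNormedRing Y] [StarRing Y] [NormedSpace ℂ Y] where
  H : Type u
  [normH : NormedAddCommGroup H]
  [ipsH : InnerProductSpace ℂ H]
  [csH : CompleteSpace H]
  π : Y →⋆ₙₐ[ℂ] (H →L[ℂ] H)
  continuous : Continuous π
  nonzero : ∃ y, π y ≠ 0
  irreducible : ∀ S : Submodule ℂ H, IsClosed (S : Set H) →
    (∀ y : Y, ∀ v ∈ S, π y v ∈ S) → S = ⊥ ∨ S = ⊤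

/-- A primitive ideal: the kernel of an irreducible `*`-representation. -/
def IsPrimitiveIdeal {Y : Type u} [NonUnitalNormedRing Y] [StarRing Y] [NormedSpace ℂ Y]
    (K : TwoSidedIdeal Y) : Prop :=
  ∃ ρ : IrreducibleRepOn Y, ∀ y, y ∈ K ↔ ρ.π y = 0

/-- A subset `K` of a ring is modular (as an ideal) if there is a relative unit `e`
with `x * e - x ∈ K` and `e * x - x ∈ K` for every `x`. -/
def IsModularIdealSet {Y : Type u} [NonUnitalRing Y] (K : Set Y) : Prop :=
  ∃ e : Y, ∀ x : Y, x * e - x ∈ K ∧ e * x - x ∈ K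

/-- A maximal modular (two-sided) ideal: a modular ideal which is proper and maximal among
proper two-sided ideals. -/
def IsMaximalModularIdeal {Y : Type u} [NonUnitalRing Y] (K : TwoSidedIdeal Y) : Prop :=
  IsModularIdealSet (K : Set Y) ∧ (K : Set Y) ≠ Set.univ ∧
    ∀ L : TwoSidedIdeal Y, (K : Set Y) ⊆ (L : Set Y) →
      (L : Set Y) = (K : Set Y) ∨ (L : Set Y) = Set.univ

/-- The operator norm of a `p × p` matrix of bounded operators on a Hilbert space `H`,
viewed as an operator on the `ℓ²`-direct sum `H ⊕ ⋯ ⊕ H`. -/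
noncomputable def opMatrixNorm {H : Type u} [NormedAddCommGroup H] [InnerProductSpace ℂ H]
    {p : ℕ} (T : Matrix (Fin p) (Fin p) (H →L[ℂ] H)) : ℝ :=
  sSup { r : ℝ | ∃ x : Fin p → H, (∑ i, ‖x i‖ ^ 2) ≤ 1 ∧
      r = Real.sqrt (∑ i, ‖∑ j, (T i j) (x j)‖ ^ 2) }

/-- An operator algebra structure on a Banach algebra `Y`: a bicontinuous algebra
homomorphism of `Y` into the bounded operators on some Hilbert space. -/
structure OperatorAlgebraEmbedding (Y : Type u) [NonUnitalNormedRing Y] [NormedSpace ℂ Y] where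
  H : Type u
  [normH : NormedAddCommGroup H]
  [ipsH : InnerProductSpace ℂ H]
  [csH : CompleteSpace H]
  ρ : Y →ₙₐ[ℂ] (H →L[ℂ] H)
  c : ℝ
  C : ℝ
  c_pos : 0 < c
  lower : ∀ y, c * ‖y‖ ≤ ‖ρ y‖
  upper : ∀ y, ‖ρ y‖ ≤ C * ‖y‖

/-- The matrix norms on `Y` induced by an operator algebra embedding, giving `Y` its
operator space structure: the norm of `v ∈ M_p(Y)` is the operator norm of the matrix
of operators obtained by applying the embedding entrywise. -/
noncomputable def OperatorAlgebraEmbedding.matrixNorm {Y : Type u}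
    [NonUnitalNormedRing Y] [NormedSpace ℂ Y] (e : OperatorAlgebraEmbedding Y)
    (p : ℕ) (v : Matrix (Fin p) (Fin p) Y) : ℝ :=
  letI := e.normH; letI := e.ipsH
  opMatrixNorm (v.map e.ρ)

/-- The Banach space projective tensor norm `‖·‖_γ` on the algebraic tensor product. -/
noncomputable def bsProjNorm {A B : Type u} [NonUnitalNormedRing A] [NormedSpace ℂ A]
    [NonUnitalNormedRing B] [NormedSpace ℂ B] (u : A ⊗[ℂ] B) : ℝ :=
  sInf { r : ℝ | ∃ (n : ℕ) (a : Fin n → A) (b : Fin n → B),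
      u = ∑ i, a i ⊗ₜ[ℂ] b i ∧ r = ∑ i, ‖a i‖ * ‖b i‖ }

/-- A C⋆-algebra `A` is subhomogeneous if there is `n : ℕ` bounding the (finite)
dimensions of all its irreducible `*`-representations. -/
def IsSubhomogeneous (A : Type u) [NonUnitalCStarAlgebra A] : Prop :=
  ∃ n : ℕ, ∀ ρ : IrreducibleRepOn A,
    letI := ρ.normH
    letI := ρ.ipsH
    FiniteDimensional ℂ ρ.H ∧ Module.finrank ℂ ρ.H ≤ n

/-!
The spectrum of an element of `A ⊗̂ B` is detected by `*`-homomorphisms into matrix algebras over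
`B`. If `1 + b` has no left inverse, there is a closed maximal modular left ideal `L` of the algebra
`X = A ⊗̂ B` that contains every `x + x b` but not `b`. The factor `A` acts on `X ⧸ L` with prime
kernel. As `A` is subhomogeneous, the orthogonal families in `A` that survive modulo this kernel
have bounded size, so that the image of `A` has a minimal projection, and the GNS representation of
its corner functional is a surjection `ρ : A → M_k(ℂ)` whose kernel annihilates `X ⧸ L`. Hence
`ρ ⊗ id` extends to a surjective `*`-homomorphism `X → M_k(B)` whose kernel maps `X` into `L`, so
that the image of `1 + b` has no left inverse either; and in the C⋆-algebra `M_k(B)` elements of the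
form `x⋆x` have nonnegative spectrum.
-/

open Complex
open scoped ComplexOrder InnerProductSpace

section PureStates

variable {C : Type*} [CStarAlgebra C] [PartialOrder C] [StarOrderedRing C]

lemma exists_positiveLinearMap_apply_ne_zero {h : C} (hh : 0 ≤ h) (h0 : h ≠ 0) :
    ∃ f : C →ₚ[ℂ] ℂ, f h ≠ 0 := by
  let K : ProperCone ℝ C :=
    { ConvexCone.positive ℝ C |>.toPointedCone le_rfl with
      isClosed' := CStarAlgebra.isClosed_nonneg }
  have hK : -h ∉ K := fun hneg ↦ h0 (le_antisymm (neg_nonneg.1 hneg) hh)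
  obtain ⟨f, hf, hfh⟩ := ProperCone.hyperplane_separation_point K hK
  let F : C →ₗ[ℂ] ℂ := Module.Dual.extendRCLike
    ((f : C →ₗ[ℝ] ℝ) ∘ₗ (selfAdjoint.submodule ℝ C).subtype ∘ₗ realPart)
  have hF {x : C} (hx : 0 ≤ x) : F x = f x := by
    have hs : IsSelfAdjoint x := .of_nonneg hx
    change (f (realPart x : C) : ℂ) - I * f (realPart (I • x) : C) = f x
    simp [hs.coe_realPart, hs.imaginaryPart]
  refine ⟨PositiveLinearMap.mk₀ F fun x hx ↦ ?_, ?_⟩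
  · rw [hF hx]; exact_mod_cast hf x hx
  · rw [map_neg] at hfh
    change F h ≠ 0
    rw [hF hh]
    exact_mod_cast (neg_lt_zero.1 hfh).ne'

lemma norm_apply_le_four_mul_norm_apply_one (f : C →ₚ[ℂ] ℂ) (a : C) :
    ‖f a‖ ≤ 4 * (‖f 1‖ * ‖a‖) := by
  obtain ⟨x, hx, hxa, ha⟩ := CStarAlgebra.exists_sum_four_nonneg a
  calc ‖f a‖ ≤ ∑ i : Fin 4, ‖f (x i)‖ := by
        conv_lhs => rw [ha, map_sum]
        refine (norm_sum_le _ _).trans_eq (Finset.sum_congr rfl fun i _ ↦ ?_)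
        simp
    _ ≤ ∑ _i : Fin 4, ‖f 1‖ * ‖a‖ := Finset.sum_le_sum fun i _ ↦
        (f.norm_apply_le_of_nonneg _ (hx i)).trans (by gcongr; exact hxa i)
    _ = 4 * (‖f 1‖ * ‖a‖) := by simp

variable (C) in
/-- The states of a unital C⋆-algebra, as a subset of the dual with its weak-⋆ topology, in which
it is compact. -/
def stateSpace : Set (WeakDual ℂ C) :=
  {φ | (∀ a, 0 ≤ a → 0 ≤ φ a) ∧ φ 1 = 1}

/-- A state regarded as a positive linear map, the form in which the GNS construction takes it. -/
def stateSpace.toPositiveLinearMap {φ : WeakDual ℂ C} (hφ : φ ∈ stateSpace C) : C →ₚ[ℂ] ℂ :=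
  PositiveLinearMap.mk₀ (φ : C →ₗ[ℂ] ℂ) hφ.1

@[simp]
lemma stateSpace.toPositiveLinearMap_apply {φ : WeakDual ℂ C} (hφ : φ ∈ stateSpace C) (a : C) :
    stateSpace.toPositiveLinearMap hφ a = φ a := rfl

/-- The state obtained from a positive functional by dividing it by its value at `1`; it is a state
only if that value is nonzero. -/
def normalizedState (f : C →ₚ[ℂ] ℂ) : WeakDual ℂ C :=
  StrongDual.toWeakDual ((f 1)⁻¹ • ⟨(f : C →ₗ[ℂ] ℂ), map_continuous f⟩)

@[simp]
lemma normalizedState_apply (f : C →ₚ[ℂ] ℂ) (a : C) : normalizedState f a = (f 1)⁻¹ * f a := rfl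

lemma normalizedState_mem_stateSpace {f : C →ₚ[ℂ] ℂ} (hf : f 1 ≠ 0) :
    normalizedState f ∈ stateSpace C :=
  ⟨fun _ ha ↦ mul_nonneg (inv_nonneg.2 (f.map_nonneg zero_le_one)) (f.map_nonneg ha), by simp [hf]⟩

lemma isCompact_stateSpace : IsCompact (stateSpace C) := by
  refine (WeakDual.isCompact_closedBall (0 : StrongDual ℂ C) 4).of_isClosed_subset ?_ ?_
  · have heval (a : C) : Continuous fun φ : WeakDual ℂ C ↦ φ a := WeakDual.eval_continuous a
    simp only [stateSpace, Set.ofPred_and, Set.ofPred_forall]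
    exact .inter (isClosed_iInter fun a ↦ isClosed_iInter fun _ ↦
      isClosed_le continuous_const (heval a)) (isClosed_eq (heval 1) continuous_const)
  · intro φ hφ
    have hbound (a : C) : ‖φ a‖ ≤ 4 * ‖a‖ := by
      simpa [hφ.2] using
        norm_apply_le_four_mul_norm_apply_one (stateSpace.toPositiveLinearMap hφ) a
    simpa using ContinuousLinearMap.opNorm_le_bound (WeakDual.toStrongDual φ) (by norm_num) hbound

lemma convex_stateSpace {C : Type*} [CStarAlgebra C] [PartialOrder C] :
    Convex ℝ (stateSpace C) := by
  intro φ hφ ψ hψ s t hs ht hst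
  refine ⟨fun a ha ↦ add_nonneg (smul_nonneg hs (hφ.1 a ha)) (smul_nonneg ht (hψ.1 a ha)), ?_⟩
  change s • φ 1 + t • ψ 1 = 1
  rw [hφ.2, hψ.2, ← add_smul, hst, one_smul]

lemma closure_convexHull_extremePoints_stateSpace :
    closure (convexHull ℝ (Set.extremePoints ℝ (stateSpace C))) = stateSpace C := by
  have : IsScalarTower ℝ ℂ (WeakDual ℂ C) :=
    ⟨fun r z φ ↦ DFunLike.ext _ _ fun a ↦ smul_assoc r z (φ a)⟩
  have : LocallyConvexSpace ℝ (WeakDual ℂ C) := WeakDual.withSeminorms ℂ C |>.toLocallyConvexSpace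
  exact closure_convexHull_extremePoints isCompact_stateSpace convex_stateSpace

lemma exists_mem_extremePoints_stateSpace_apply_ne_zero {h : C} (hh : 0 ≤ h) (h0 : h ≠ 0) :
    ∃ φ ∈ Set.extremePoints ℝ (stateSpace C), φ h ≠ 0 := by
  by_contra! hvanish
  obtain ⟨f, hfh⟩ := exists_positiveLinearMap_apply_ne_zero hh h0
  have hf1 : f 1 ≠ 0 := fun h1 ↦ hfh <| norm_le_zero_iff.1 <| by
    simpa [h1] using norm_apply_le_four_mul_norm_apply_one f h
  have hclosed : IsClosed {φ : WeakDual ℂ C | φ h = 0} :=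
    isClosed_eq (WeakDual.eval_continuous h) continuous_const
  have hconvex : Convex ℝ {φ : WeakDual ℂ C | φ h = 0} := by
    intro φ (hφ : φ h = 0) ψ (hψ : ψ h = 0) s t _ _ _
    change s • φ h + t • ψ h = 0
    rw [hφ, hψ, smul_zero, smul_zero, add_zero]
  have hsub : stateSpace C ⊆ {φ | φ h = 0} := by
    rw [← closure_convexHull_extremePoints_stateSpace]
    exact closure_minimal (convexHull_min hvanish hconvex) hclosed
  have hzero : (f 1)⁻¹ * f h = 0 := hsub (normalizedState_mem_stateSpace hf1)
  exact mul_ne_zero (inv_ne_zero hf1) hfh hzero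

lemma apply_eq_mul_of_add_eq_of_mem_extremePoints {φ : WeakDual ℂ C}
    (hφ : φ ∈ Set.extremePoints ℝ (stateSpace C)) (f g : C →ₚ[ℂ] ℂ) (hfg : ∀ a, f a + g a = φ a)
    (a : C) : f a = f 1 * φ a := by
  have hsum : f 1 + g 1 = 1 := by rw [hfg, hφ.1.2]
  by_cases hf1 : f 1 = 0
  · have := norm_apply_le_four_mul_norm_apply_one f a
    simpa [hf1] using this
  by_cases hg1 : g 1 = 0
  · have hga : g a = 0 := by simpa [hg1] using norm_apply_le_four_mul_norm_apply_one g a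
    rw [← hfg a, hga, add_zero, eq_sub_of_add_eq hsum, hg1, sub_zero, one_mul]
  have hpos {p : C →ₚ[ℂ] ℂ} (hp : p 1 ≠ 0) : 0 < (p 1).re ∧ ((p 1).re : ℂ) = p 1 := by
    obtain ⟨hre, him⟩ := Complex.pos_iff.1 ((p.map_nonneg zero_le_one).lt_of_ne' hp)
    exact ⟨hre, Complex.ext rfl him⟩
  obtain ⟨hfpos, hfre⟩ := hpos hf1
  obtain ⟨hgpos, hgre⟩ := hpos hg1
  have hφ_mem : φ ∈ openSegment ℝ (normalizedState f) (normalizedState g) := by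
    refine ⟨(f 1).re, (g 1).re, hfpos, hgpos, by simpa using congrArg re hsum, ?_⟩
    refine DFunLike.ext _ _ fun x ↦ ?_
    change (f 1).re • ((f 1)⁻¹ * f x) + (g 1).re • ((g 1)⁻¹ * g x) = φ x
    rw [Complex.real_smul, Complex.real_smul, hfre, hgre, mul_inv_cancel_left₀ hf1,
      mul_inv_cancel_left₀ hg1, hfg]
  have heq : normalizedState f = φ := (mem_extremePoints.1 hφ).2 _
    (normalizedState_mem_stateSpace hf1) _ (normalizedState_mem_stateSpace hg1) hφ_mem |>.1
  rw [← heq, normalizedState_apply, mul_inv_cancel_left₀ hf1]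

end PureStates

section CyclicRepresentations

lemma apply_mem_orthogonal_of_invariant {A H : Type*} [NonUnitalSemiring A] [StarRing A]
    [Module ℂ A] [NormedAddCommGroup H] [InnerProductSpace ℂ H] [CompleteSpace H]
    {π : A →⋆ₙₐ[ℂ] (H →L[ℂ] H)} {S : Submodule ℂ H} (hS : ∀ a, ∀ v ∈ S, π a v ∈ S)
    (a : A) {v : H} (hv : v ∈ Sᗮ) : π a v ∈ Sᗮ := by
  intro w hw
  rw [← star_star a, map_star, ContinuousLinearMap.star_eq_adjoint,
    ContinuousLinearMap.adjoint_inner_right]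
  exact hv _ (hS _ w hw)

variable {C H : Type*} [CStarAlgebra C] [PartialOrder C] [StarOrderedRing C]
  [NormedAddCommGroup H] [InnerProductSpace ℂ H] [CompleteSpace H]

/-- The positive functional `a ↦ ⟪ξ, π a ξ⟫` attached to a vector of a `*`-representation. -/
def vectorFunctional (π : C →⋆ₐ[ℂ] (H →L[ℂ] H)) (ξ : H) : C →ₚ[ℂ] ℂ :=
  PositiveLinearMap.mk₀
    { toFun := fun a ↦ ⟪ξ, π a ξ⟫_ℂ
      map_add' := fun a b ↦ by simp
      map_smul' := fun z a ↦ by simp } fun a ha ↦ by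
    obtain ⟨b, rfl⟩ := CStarAlgebra.nonneg_iff_eq_star_mul_self.1 ha
    change 0 ≤ ⟪ξ, π (star b * b) ξ⟫_ℂ
    rw [map_mul, map_star, mul_apply_eq_comp, ContinuousLinearMap.star_eq_adjoint,
      ContinuousLinearMap.adjoint_inner_right, inner_self_eq_norm_sq_to_K]
    norm_cast
    positivity

@[simp]
lemma vectorFunctional_apply (π : C →⋆ₐ[ℂ] (H →L[ℂ] H)) (ξ : H) (a : C) :
    vectorFunctional π ξ a = ⟪ξ, π a ξ⟫_ℂ := rfl

lemma eq_bot_or_eq_top_of_mem_extremePoints_stateSpace {π : C →⋆ₐ[ℂ] (H →L[ℂ] H)} {ξ : H}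
    (hξ : DenseRange fun a ↦ π a ξ) {φ : WeakDual ℂ C}
    (hφ : φ ∈ Set.extremePoints ℝ (stateSpace C)) (hφξ : ∀ a, ⟪ξ, π a ξ⟫_ℂ = φ a)
    {S : Submodule ℂ H} (hS : IsClosed (S : Set H)) (hinv : ∀ a, ∀ v ∈ S, π a v ∈ S) :
    S = ⊥ ∨ S = ⊤ := by
  have : CompleteSpace S := hS.completeSpace_coe
  have hinv' (a : C) {v : H} (hv : v ∈ Sᗮ) : π a v ∈ Sᗮ :=
    apply_mem_orthogonal_of_invariant (π := (π : C →⋆ₙₐ[ℂ] (H →L[ℂ] H))) hinv a hv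
  have eq_top {R : Submodule ℂ H} (hR : IsClosed (R : Set H)) (hξR : ∀ a, π a ξ ∈ R) : R = ⊤ :=
    Submodule.eq_top_iff'.2 fun v ↦
      closure_minimal (Set.range_subset_iff.2 hξR) hR (hξ v)
  obtain ⟨η, hη, ζ, hζ, hsum⟩ := S.exists_add_mem_mem_orthogonal ξ
  have hηζ (a : C) : ⟪η, π a ζ⟫_ℂ = 0 := hinv' a hζ _ hη
  have hζη (a : C) : ⟪ζ, π a η⟫_ℂ = 0 := (S.mem_orthogonal' _).1 hζ _ (hinv a _ hη)
  have hmul (a : C) : ⟪η, π a η⟫_ℂ = ⟪η, π 1 η⟫_ℂ * φ a := by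
    refine apply_eq_mul_of_add_eq_of_mem_extremePoints hφ (vectorFunctional π η)
      (vectorFunctional π ζ) (fun b ↦ ?_) a
    rw [vectorFunctional_apply, vectorFunctional_apply, ← hφξ, hsum, map_add, inner_add_left,
      inner_add_right, inner_add_right, hηζ, hζη, add_zero, zero_add]
  have hη_eq : η = ⟪η, π 1 η⟫_ℂ • ξ := by
    refine hξ.eq_of_inner_right ℂ fun a ↦ ?_
    have hadj (v : H) : ⟪π a ξ, v⟫_ℂ = ⟪ξ, π (star a) v⟫_ℂ := by
      rw [map_star, ContinuousLinearMap.star_eq_adjoint, ContinuousLinearMap.adjoint_inner_right]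
    calc ⟪π a ξ, η⟫_ℂ = ⟪η, π (star a) η⟫_ℂ := by
          rw [hadj, hsum, inner_add_left, hζη, add_zero]
      _ = ⟪π a ξ, ⟪η, π 1 η⟫_ℂ • ξ⟫_ℂ := by rw [hmul, inner_smul_right, hadj, hφξ]
  by_cases h0 : ⟪η, π 1 η⟫_ℂ = 0
  · left
    have hξζ : ξ = ζ := by rw [hsum, hη_eq, h0, zero_smul, zero_add]
    exact (Submodule.orthogonal_eq_top_iff S).1
      (eq_top S.isClosed_orthogonal fun a ↦ hinv' a (hξζ ▸ hζ))
  · right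
    have hξS : ξ ∈ S := (S.smul_mem_iff h0).1 (hη_eq ▸ hη)
    exact eq_top hS fun a ↦ hinv a _ hξS

end CyclicRepresentations

lemma gns_irreducible_of_mem_extremePoints {C : Type*} [CStarAlgebra C] [PartialOrder C]
    [StarOrderedRing C] {φ : WeakDual ℂ C} (hφ : φ ∈ Set.extremePoints ℝ (stateSpace C))
    {f : C →ₚ[ℂ] ℂ} (hf : ∀ a, f a = φ a) {S : Submodule ℂ f.GNS}
    (hS : IsClosed (S : Set f.GNS)) (hinv : ∀ a, ∀ v ∈ S, f.gnsStarAlgHom a v ∈ S) :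
    S = ⊥ ∨ S = ⊤ := by
  have hcyc (a : C) : f.gnsStarAlgHom a (f.toPreGNS 1 : f.PreGNS) = (f.toPreGNS a : f.PreGNS) := by
    simp [PositiveLinearMap.gnsStarAlgHom_apply]
  have hdense : DenseRange fun a ↦ f.gnsStarAlgHom a (f.toPreGNS 1 : f.PreGNS) := by
    simp only [hcyc]
    exact UniformSpace.Completion.denseRange_coe.comp f.toPreGNS.surjective.denseRange
      (UniformSpace.Completion.continuous_coe _)
  refine eq_bot_or_eq_top_of_mem_extremePoints_stateSpace hdense hφ (fun a ↦ ?_) hS hinv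
  rw [hcyc, UniformSpace.Completion.inner_coe, PositiveLinearMap.preGNS_inner_def]
  simp [hf]

lemma exists_irreducibleRepOn_apply_ne_zero {A : Type u} [NonUnitalCStarAlgebra A] {c : A}
    (hc : c ≠ 0) : ∃ ρ : IrreducibleRepOn A, ρ.π c ≠ 0 := by
  let := CStarAlgebra.spectralOrder (Unitization ℂ A)
  have := CStarAlgebra.spectralOrderedRing (Unitization ℂ A)
  let c' : Unitization ℂ A := c
  have hc' : star c' * c' ≠ 0 := by
    rwa [Ne, CStarRing.star_mul_self_eq_zero_iff, ← Unitization.inr_zero ℂ, Unitization.inr_inj]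
  obtain ⟨φ, hφ, hφc⟩ :=
    exists_mem_extremePoints_stateSpace_apply_ne_zero (star_mul_self_nonneg c') hc'
  let f := stateSpace.toPositiveLinearMap hφ.1
  let π : A →⋆ₙₐ[ℂ] (f.GNS →L[ℂ] f.GNS) :=
    f.gnsNonUnitalStarAlgHom.comp (Unitization.inrNonUnitalStarAlgHom ℂ A)
  have hne : π c ≠ 0 := by
    intro h0
    have hcoe : ((f.toPreGNS c' : f.PreGNS) : f.GNS) = 0 := by
      simpa [π, c'] using DFunLike.congr_fun h0 ((f.toPreGNS 1 : f.PreGNS) : f.GNS)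
    have hnorm := f.preGNS_norm_sq (f.toPreGNS c')
    rw [← UniformSpace.Completion.norm_coe, hcoe] at hnorm
    refine hφc (Eq.symm ?_)
    simpa [f] using hnorm
  have hinv {S : Submodule ℂ f.GNS} (hS : ∀ a, ∀ v ∈ S, π a v ∈ S) (a : Unitization ℂ A)
      (v : f.GNS) (hv : v ∈ S) : f.gnsStarAlgHom a v ∈ S := by
    induction a with
    | inl_add_inr z a =>
      rw [map_add, ← Unitization.algebraMap_eq_inl, AlgHomClass.commutes]
      exact S.add_mem (S.smul_mem z hv) (hS a v hv)
  let : CStarAlgebra (f.GNS →L[ℂ] f.GNS) := {}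
  have hcont : Continuous π := AddMonoidHomClass.continuous_of_bound π 1 fun a ↦ by
    rw [one_mul]
    exact NonUnitalStarAlgHom.norm_apply_le π a
  exact ⟨{ H := f.GNS, π := π, continuous := hcont, nonzero := ⟨c, hne⟩, irreducible :=
    fun S hS hSinv ↦ gns_irreducible_of_mem_extremePoints hφ (fun _ ↦ rfl) hS (hinv hSinv) }, hne⟩

section CStarNormUniqueness

variable {M : Type*} [NonUnitalCStarAlgebra M] {N : M → ℝ}

lemma IsCStarNorm.map_zero {M : Type*} [NonUnitalRing M] [StarRing M] [Module ℂ M]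
    {N : M → ℝ} (hN : IsCStarNorm N) : N 0 = 0 := by
  simpa using hN.smul_eq 0 0

lemma IsCStarNorm.nonneg {M : Type*} [NonUnitalRing M] [StarRing M] [Module ℂ M]
    {N : M → ℝ} (hN : IsCStarNorm N) (x : M) : 0 ≤ N x := by
  have h := hN.add_le x ((-1 : ℂ) • x)
  rw [hN.smul_eq, neg_one_smul, add_neg_cancel, hN.map_zero, norm_neg, norm_one, one_mul] at h
  linarith

lemma abs_le_norm_of_mem_quasispectrum {k : M} (hk : IsSelfAdjoint k) {s : ℝ}
    (hs : s ∈ quasispectrum ℝ k) : |s| ≤ ‖k‖ :=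
  NonUnitalIsometricContinuousFunctionalCalculus.norm_quasispectrum_le (𝕜 := ℝ) k hs hk

lemma exists_isSelfAdjoint_sq_add_sq_eq {k : M} (hk : IsSelfAdjoint k) (h1 : ‖k‖ ≤ 1) :
    ∃ z : M, IsSelfAdjoint z ∧ k * k * z = z * (k * k) ∧ k * k * (k * k) + z * z = k * k := by
  have hkk : k * k = cfcₙ (fun s : ℝ ↦ s * s) k := by
    rw [cfcₙ_mul (fun s : ℝ ↦ s) (fun s : ℝ ↦ s) k, cfcₙ_id' ℝ k]
  refine ⟨cfcₙ (fun s : ℝ ↦ s * √(1 - s ^ 2)) k, cfcₙ_predicate _ _, ?_, ?_⟩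
  · rw [hkk]
    exact cfcₙ_commute_cfcₙ _ _ k
  · rw [hkk, ← cfcₙ_mul (fun s : ℝ ↦ s * s) (fun s : ℝ ↦ s * s) k,
      ← cfcₙ_mul _ _ k (by fun_prop) (by simp) (by fun_prop) (by simp),
      ← cfcₙ_add _ _ k (by fun_prop) (by simp) (by fun_prop) (by simp)]
    refine cfcₙ_congr fun s hs ↦ ?_
    have hs1 : s ^ 2 ≤ 1 := by
      rw [sq_le_one_iff_abs_le_one]
      exact (abs_le_norm_of_mem_quasispectrum hk hs).trans h1
    linear_combination s ^ 2 * Real.mul_self_sqrt (sub_nonneg.2 hs1)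

-- If `k ^ 4 + z ^ 2 = k ^ 2`, then `k ^ 2 ± i z` have the same square modulus `k ^ 2` and average
-- to `k ^ 2`, so that `N (k ^ 2) ≤ N k`.
lemma IsCStarNorm.le_one_of_isSelfAdjoint (hN : IsCStarNorm N) {k : M} (hk : IsSelfAdjoint k)
    (h1 : ‖k‖ ≤ 1) : N k ≤ 1 := by
  obtain ⟨z, hz, hcomm, hsum⟩ := exists_isSelfAdjoint_sq_add_sq_eq hk h1
  have hmod (c : ℂ) (hc : c * c = -1) (hc' : star c = -c) : N (k * k + c • z) = N k := by
    have hsq : star (k * k + c • z) * (k * k + c • z) = star k * k := by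
      calc star (k * k + c • z) * (k * k + c • z)
        _ = k * k * (k * k) + c • (k * k * z) - c • (z * (k * k)) - (c * c) • (z * z) := by
          simp only [star_add, star_smul, star_mul, hz.star_eq, hk.star_eq, hc', add_mul, mul_add,
            smul_mul_assoc, mul_smul_comm, neg_smul, neg_mul]
          module
        _ = star k * k := by
          rw [hcomm, hc, hk.star_eq, add_sub_cancel_right, neg_one_smul, sub_neg_eq_add, hsum]
    refine (mul_self_inj (hN.nonneg _) (hN.nonneg _)).1 ?_
    rw [← hN.star_mul_self, ← hN.star_mul_self, hsq]
  have havg : (2 : ℂ) • (star k * k) = (k * k + I • z) + (k * k + (-I) • z) := by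
    rw [hk.star_eq]
    module
  have hle : 2 * (N k * N k) ≤ N k + N k :=
    calc 2 * (N k * N k) = N ((2 : ℂ) • (star k * k)) := by
          rw [hN.smul_eq, hN.star_mul_self, Complex.norm_ofNat]
      _ ≤ N (k * k + I • z) + N (k * k + (-I) • z) := havg ▸ hN.add_le _ _
      _ = N k + N k := by rw [hmod I (by simp) (by simp), hmod (-I) (by simp) (by simp)]
  by_contra! h
  nlinarith

lemma IsCStarNorm.le_norm (hN : IsCStarNorm N) (x : M) : N x ≤ ‖x‖ := by
  have hsa (k : M) (hk : IsSelfAdjoint k) : N k ≤ ‖k‖ := by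
    rcases eq_or_ne k 0 with rfl | h0
    · simp [hN.map_zero]
    have hpos : 0 < ‖k‖ := norm_pos_iff.2 h0
    have h1 := hN.le_one_of_isSelfAdjoint (k := (‖k‖⁻¹ : ℝ) • k) ((IsSelfAdjoint.all _).smul hk)
      (by simp [norm_smul, hpos.ne'])
    rw [← Complex.coe_smul, hN.smul_eq, Complex.norm_real, norm_inv, norm_norm,
      inv_mul_le_iff₀ hpos, mul_one] at h1
    exact h1
  refine (mul_self_le_mul_self_iff (hN.nonneg x) (norm_nonneg x)).2 ?_
  rw [← hN.star_mul_self, ← CStarRing.norm_star_mul_self]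
  exact hsa _ (.star_mul_self x)

lemma exists_mul_mul_eq_smul_cfcₙ_cutoff {h : M} (hs : IsSelfAdjoint h) {t : ℝ} (ht : 0 < t) :
    ∃ u : M, ‖u‖ ≤ 1 ∧
      h * cfcₙ (fun s : ℝ ↦ max (s - t) 0) h * u = t • cfcₙ (fun s : ℝ ↦ max (s - t) 0) h := by
  have hpos (s : ℝ) : 0 < max |s| t := lt_max_of_lt_right ht
  have hfrac : Continuous fun s : ℝ ↦ t / max |s| t :=
    continuous_const.div (by fun_prop) fun s ↦ (hpos s).ne'
  refine ⟨cfcₙ (fun s : ℝ ↦ t / max |s| t * min (|s| / t) 1) h, ?_, ?_⟩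
  · refine norm_cfcₙ_le fun s _ ↦ ?_
    rw [Real.norm_of_nonneg (by positivity)]
    exact mul_le_one₀ (div_le_one_of_le₀ (le_max_right _ _) (hpos s).le) (by positivity)
      (min_le_right _ _)
  · nth_rewrite 1 [← cfcₙ_id' ℝ h]
    rw [← cfcₙ_mul _ _ h (by fun_prop) (by simp) (by fun_prop) (by simp [ht.le]),
      ← cfcₙ_mul _ _ h (by fun_prop) (by simp) (by fun_prop) (by simp),
      ← cfcₙ_smul t _ h (by fun_prop) (by simp [ht.le])]
    refine cfcₙ_congr fun s _ ↦ ?_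
    rcases le_total s t with hst | hst
    · simp [hst]
    · have hs0 : 0 < s := ht.trans_le hst
      have h1 : 1 ≤ s / t := (one_le_div ht).2 hst
      simp only [abs_of_pos hs0, max_eq_left hst, min_eq_right h1, smul_eq_mul]
      field_simp

lemma IsCStarNorm.cfcₙ_cutoff_eq_zero (hN : IsCStarNorm N) {h : M} (hs : IsSelfAdjoint h) {t : ℝ}
    (ht : N h < t) : cfcₙ (fun s : ℝ ↦ max (s - t) 0) h = 0 := by
  have ht0 : 0 < t := (hN.nonneg h).trans_lt ht
  set k := cfcₙ (fun s : ℝ ↦ max (s - t) 0) h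
  obtain ⟨u, hu, huk⟩ : ∃ u : M, ‖u‖ ≤ 1 ∧ h * k * u = t • k :=
    exists_mul_mul_eq_smul_cfcₙ_cutoff hs ht0
  refine hN.eq_zero_of k (le_antisymm ?_ (hN.nonneg k))
  have hle : t * N k ≤ N h * N k :=
    calc t * N k = N (h * k * u) := by
          rw [huk, ← Complex.coe_smul, hN.smul_eq, Complex.norm_of_nonneg ht0.le]
      _ ≤ N h * N k * N u := (hN.mul_le _ _).trans
          (mul_le_mul_of_nonneg_right (hN.mul_le _ _) (hN.nonneg u))
      _ ≤ N h * N k := mul_le_of_le_one_right (mul_nonneg (hN.nonneg h) (hN.nonneg k))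
          ((hN.le_norm u).trans hu)
  nlinarith

lemma IsCStarNorm.norm_le_of_quasispectrum_nonneg (hN : IsCStarNorm N) {h : M}
    (hs : IsSelfAdjoint h) (hpos : ∀ s ∈ quasispectrum ℝ h, 0 ≤ s) : ‖h‖ ≤ N h := by
  refine le_of_forall_gt_imp_ge_of_dense fun t ht ↦ ?_
  have ht0 : 0 < t := (hN.nonneg h).trans_lt ht
  have hmin : cfcₙ (fun s : ℝ ↦ min s t) h = h := by
    rw [← add_zero (cfcₙ (fun s : ℝ ↦ min s t) h), ← hN.cfcₙ_cutoff_eq_zero hs ht,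
      ← cfcₙ_add _ _ h (by fun_prop) (by simp [ht0.le]) (by fun_prop) (by simp [ht0.le])]
    conv_rhs => rw [← cfcₙ_id' ℝ h]
    refine cfcₙ_congr fun s _ ↦ ?_
    rcases le_total s t with hst | hst <;> simp [hst]
  rw [← hmin]
  refine norm_cfcₙ_le fun s hsq ↦ ?_
  rw [Real.norm_of_nonneg (le_min (hpos s hsq) ht0.le)]
  exact min_le_right _ _

lemma IsCStarNorm.eq_norm (hN : IsCStarNorm N) (x : M) : N x = ‖x‖ := by
  let := CStarAlgebra.spectralOrder M
  have := CStarAlgebra.spectralOrderedRing M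
  refine le_antisymm (hN.le_norm x)
    ((mul_self_le_mul_self_iff (norm_nonneg x) (hN.nonneg x)).2 ?_)
  rw [← hN.star_mul_self, ← CStarRing.norm_star_mul_self]
  exact hN.norm_le_of_quasispectrum_nonneg (.star_mul_self x)
    (quasispectrum_nonneg_of_nonneg _ (star_mul_self_nonneg x))

open CStarMatrix in
lemma IsCStarNorm.matrix_eq_norm_ofMatrix {A : Type*} [NonUnitalCStarAlgebra A] [PartialOrder A]
    [StarOrderedRing A] {n : Type*} [Fintype n] {N : Matrix n n A → ℝ} (hN : IsCStarNorm N)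
    (v : Matrix n n A) : N v = ‖(ofMatrix v : CStarMatrix n n A)‖ :=
  have hN' : IsCStarNorm fun x : CStarMatrix n n A ↦ N (ofMatrix.symm x) :=
    ⟨fun x y ↦ hN.add_le x y, fun c x ↦ hN.smul_eq c x, fun x hx ↦ hN.eq_zero_of x hx,
      fun x y ↦ hN.mul_le x y, fun x ↦ hN.star_mul_self x⟩
  hN'.eq_norm (ofMatrix v)

end CStarNormUniqueness

section ClosedPrimeIdeals

open ContinuousMap

variable {X : Type*} [TopologicalSpace X] [CompactSpace X] [T2Space X] {I : Ideal C(X, ℝ)}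

lemma eq_of_notMem_setOfIdeal
    (hprime : ∀ f g : C(X, ℝ), 0 ≤ f → 0 ≤ g → f * g = 0 → f ∈ I ∨ g ∈ I) {x y : X}
    (hx : x ∉ setOfIdeal I) (hy : y ∉ setOfIdeal I) : x = y := by
  by_contra hxy
  obtain ⟨U, V, hU, hV, hxU, hyV, hUV⟩ := t2_separation hxy
  have bump {W : Set X} (hW : IsOpen W) {z : X} (hz : z ∈ W) :
      ∃ f : C(X, ℝ), 0 ≤ f ∧ f z ≠ 0 ∧ ∀ w ∉ W, f w = 0 := by
    obtain ⟨f, hf0, hf1, hf⟩ := exists_continuous_zero_one_of_isClosed hW.isClosed_compl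
      isClosed_singleton (Set.disjoint_singleton_right.2 (Set.notMem_compl_iff.2 hz))
    exact ⟨f, fun w ↦ (hf w).1, by simp [hf1 rfl], fun w hw ↦ hf0 hw⟩
  obtain ⟨f, hf, hfx, hfU⟩ := bump hU hxU
  obtain ⟨g, hg, hgy, hgV⟩ := bump hV hyV
  have hfg : f * g = 0 := by
    ext w
    by_cases hw : w ∈ U
    · simp [hgV w (hUV.notMem_of_mem_left hw)]
    · simp [hfU w hw]
  rcases hprime f g hf hg hfg with h | h
  · exact hfx (notMem_setOfIdeal.1 hx h)
  · exact hgy (notMem_setOfIdeal.1 hy h)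

lemma eq_top_or_exists_forall_mem_of_apply_eq_zero (hI : IsClosed (I : Set C(X, ℝ)))
    (hprime : ∀ f g : C(X, ℝ), 0 ≤ f → 0 ≤ g → f * g = 0 → f ∈ I ∨ g ∈ I) :
    I = ⊤ ∨ ∃ x, ∀ f : C(X, ℝ), f x = 0 → f ∈ I := by
  rw [← idealOfSet_ofIdeal_isClosed hI]
  by_cases hx : ∃ x, x ∉ setOfIdeal I
  · obtain ⟨x, hx⟩ := hx
    refine .inr ⟨x, fun f hf ↦ mem_idealOfSet.2 fun y hy ↦ ?_⟩
    rwa [← eq_of_notMem_setOfIdeal hprime hx hy]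
  · push Not at hx
    exact .inl (Ideal.eq_top_iff_one _ |>.2 (mem_idealOfSet.2 fun y hy ↦ absurd (hx y) hy))

end ClosedPrimeIdeals

section IdMulCalculus

open scoped ContinuousMapZero

variable {A : Type*} [NonUnitalCStarAlgebra A] {a : A}

/-- The element `a * f(a)` of a C⋆-algebra, for a self-adjoint element `a` and a continuous function
`f` on its quasispectrum which need not vanish at `0`. -/
def cfcIdMul (ha : IsSelfAdjoint a) : C(quasispectrum ℝ a, ℝ) →L[ℝ] A where
  toFun f := cfcₙHom ha ⟨(ContinuousMapZero.id (quasispectrum ℝ a)).toContinuousMap * f,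
    zero_mul _⟩
  map_add' f g := by
    rw [← map_add]
    congr 1
    ext x
    exact mul_add (x : ℝ) (f x) (g x)
  map_smul' r f := by
    rw [RingHom.id_apply, ← map_smul]
    congr 1
    ext x
    exact mul_left_comm (x : ℝ) r (f x)
  cont := (cfcₙHom_continuous ha).comp
    (ContinuousMapZero.isEmbedding_toContinuousMap.continuous_iff.2 (continuous_const_mul _))

lemma cfcIdMul_one (ha : IsSelfAdjoint a) : cfcIdMul ha 1 = a := by
  conv_rhs => rw [← cfcₙHom_id (R := ℝ) ha]
  exact congrArg (cfcₙHom (R := ℝ) ha) (ContinuousMapZero.ext fun x ↦ mul_one (x : ℝ))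

lemma cfcIdMul_mul_coe (ha : IsSelfAdjoint a) (f : C(quasispectrum ℝ a, ℝ))
    (g : C(quasispectrum ℝ a, ℝ)₀) : cfcIdMul ha (f * g) = cfcIdMul ha f * cfcₙHom ha g := by
  refine .trans (congrArg (cfcₙHom ha) (ContinuousMapZero.ext fun x ↦ ?_))
    (map_mul (cfcₙHom ha) _ _)
  exact (mul_assoc (x : ℝ) (f x) (g x)).symm

lemma cfcIdMul_id (ha : IsSelfAdjoint a) :
    cfcIdMul ha (ContinuousMapZero.id (quasispectrum ℝ a)) = a * a := by
  simpa [cfcIdMul_one, cfcₙHom_id] using cfcIdMul_mul_coe ha 1 (.id _)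

lemma cfcIdMul_mul_cfcIdMul_eq_zero (ha : IsSelfAdjoint a) {f g : C(quasispectrum ℝ a, ℝ)}
    (hfg : f * g = 0) : cfcIdMul ha f * cfcIdMul ha g = 0 := by
  refine (map_mul (cfcₙHom ha) _ _).symm.trans
    (.trans (congrArg (cfcₙHom ha) (ContinuousMapZero.ext fun x ↦ ?_)) (map_zero (cfcₙHom ha)))
  calc (x : ℝ) * f x * (x * g x) = x * x * (f x * g x) := by ring
    _ = 0 := by rw [show f x * g x = 0 from DFunLike.congr_fun hfg x, mul_zero]

variable [PartialOrder A] [StarOrderedRing A]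

lemma cfcIdMul_nonneg (ha : 0 ≤ a) {f : C(quasispectrum ℝ a, ℝ)} (hf : 0 ≤ f) :
    0 ≤ cfcIdMul ha.isSelfAdjoint f :=
  (cfcₙHom_nonneg_iff ha.isSelfAdjoint).2 fun x ↦
    mul_nonneg (quasispectrum_nonneg_of_nonneg a ha (x : ℝ) x.2) (hf x)

lemma cfcIdMul_le (ha : 0 ≤ a) (f : C(quasispectrum ℝ a, ℝ)) :
    cfcIdMul ha.isSelfAdjoint f ≤ ‖f‖ • a := by
  have h : 0 ≤ cfcIdMul ha.isSelfAdjoint (‖f‖ • 1 - f) := cfcIdMul_nonneg ha fun x ↦ by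
    simpa using f.apply_le_norm x
  rwa [map_sub, map_smul, cfcIdMul_one, sub_nonneg] at h

end IdMulCalculus

section OrthogonalCones

variable {A : Type u} [NonUnitalCStarAlgebra A] [PartialOrder A] [StarOrderedRing A]

lemma mul_eq_zero_symm_of_nonneg {a b : A} (ha : 0 ≤ a) (hb : 0 ≤ b) (h : a * b = 0) :
    b * a = 0 := by
  simpa [ha.isSelfAdjoint.star_eq, hb.isSelfAdjoint.star_eq] using congrArg star h

lemma mul_sqrt_eq_zero {b z : A} (hb : 0 ≤ b) (h : z * b * star z = 0) : z * CFC.sqrt b = 0 := by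
  rw [← CStarRing.mul_star_self_eq_zero_iff, star_mul,
    (CFC.sqrt_nonneg b).isSelfAdjoint.star_eq, mul_assoc, ← mul_assoc (CFC.sqrt b),
    CFC.sqrt_mul_sqrt_self b, ← mul_assoc, h]

/-- The hereditary cone of the nonnegative elements that are orthogonal to `S`. -/
def orthogonalCone (S : Set A) : Set A := {b | 0 ≤ b ∧ ∀ z ∈ S, z * b = 0}

namespace orthogonalCone

variable {S : Set A} {b c p : A}

lemma add_mem (hb : b ∈ orthogonalCone S) (hc : c ∈ orthogonalCone S) :
    b + c ∈ orthogonalCone S :=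
  ⟨add_nonneg hb.1 hc.1, fun z hz ↦ by rw [mul_add, hb.2 z hz, hc.2 z hz, add_zero]⟩

lemma smul_mem {r : ℝ} (hr : 0 ≤ r) (hb : b ∈ orthogonalCone S) : r • b ∈ orthogonalCone S :=
  ⟨smul_nonneg hr hb.1, fun z hz ↦ by rw [mul_smul_comm, hb.2 z hz, smul_zero]⟩

lemma sqrt_mem (hb : b ∈ orthogonalCone S) : CFC.sqrt b ∈ orthogonalCone S :=
  ⟨CFC.sqrt_nonneg b, fun z hz ↦ mul_sqrt_eq_zero hb.1 (by rw [hb.2 z hz, zero_mul])⟩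

lemma mem_of_le (hc : c ∈ orthogonalCone S) (hb : 0 ≤ b) (hbc : b ≤ c) : b ∈ orthogonalCone S := by
  refine ⟨hb, fun z hz ↦ ?_⟩
  have hzero : z * b * star z = 0 := by
    refine le_antisymm ?_ (star_right_conjugate_nonneg hb z)
    simpa [hc.2 z hz] using star_right_conjugate_le_conjugate hbc z
  rw [← CFC.sqrt_mul_sqrt_self b, ← mul_assoc, mul_sqrt_eq_zero hb hzero, zero_mul]

lemma conjugate_mem (hp : p ∈ orthogonalCone S) (hb : 0 ≤ b) : p * b * p ∈ orthogonalCone S :=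
  ⟨conjugate_nonneg_of_nonneg hb hp.1, fun z hz ↦ by
    rw [← mul_assoc, ← mul_assoc, hp.2 z hz, zero_mul, zero_mul]⟩

lemma cfcIdMul_mem (hb : b ∈ orthogonalCone S) {f : C(quasispectrum ℝ b, ℝ)} (hf : 0 ≤ f) :
    cfcIdMul hb.1.isSelfAdjoint f ∈ orthogonalCone S :=
  mem_of_le (smul_mem (norm_nonneg f) hb) (cfcIdMul_nonneg hb.1 hf) (cfcIdMul_le hb.1 f)

end orthogonalCone

end OrthogonalCones

section OrthoPrimeCones

open scoped ContinuousMapZero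

variable {A : Type u} [NonUnitalCStarAlgebra A]
  {R : Type*} [NonUnitalNormedRing R] [NormedSpace ℂ R]

lemma apply_real_smul (T : A →ₙₐ[ℂ] R) (r : ℝ) (a : A) : T (r • a) = (r : ℂ) • T a := by
  rw [← Complex.coe_smul, map_smul]

lemma apply_cfcIdMul_mul_eq_zero (T : A →ₙₐ[ℂ] R) {a : A} (ha : IsSelfAdjoint a)
    {f : C(quasispectrum ℝ a, ℝ)} (hf : T (cfcIdMul ha f) = 0) (g : C(quasispectrum ℝ a, ℝ)) :
    T (cfcIdMul ha (g * f)) = 0 := by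
  let g₀ : C(quasispectrum ℝ a, ℝ)₀ := ⟨g - .const _ (g 0), sub_self (g 0)⟩
  have hg : g * f = f * g₀.toContinuousMap + g 0 • f := by
    ext x
    change g x * f x = f x * (g x - g 0) + g 0 * f x
    ring
  rw [hg, map_add, map_smul, map_add, apply_real_smul, hf, smul_zero, add_zero]
  exact (congrArg T (cfcIdMul_mul_coe ha f g₀)).trans (by rw [map_mul, hf, zero_mul])

/-- No two orthogonal elements of `K` survive under `T`; for a homomorphism `T` that separates
enough points of `K` this says that the image of `K` has rank at most one. -/
def IsOrthoPrimeOn (T : A →ₙₐ[ℂ] R) (K : Set A) : Prop :=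
  ∀ b ∈ K, ∀ c ∈ K, b * c = 0 → T b = 0 ∨ T c = 0

variable [PartialOrder A] [StarOrderedRing A] {T : A →ₙₐ[ℂ] R}

-- The functions `f` with `T (b * f b) = 0` form a closed prime ideal, hence contain all functions
-- vanishing at some point `t`, among them `x ↦ x - t`.
lemma IsOrthoPrimeOn.exists_apply_mul_self_eq_smul (hT : Continuous T) {S : Set A}
    (hS : IsOrthoPrimeOn T (orthogonalCone S)) {b : A} (hb : b ∈ orthogonalCone S) :
    ∃ t : ℝ, 0 ≤ t ∧ T b * T b = (t : ℂ) • T b := by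
  have hsa := hb.1.isSelfAdjoint
  let I : Ideal C(quasispectrum ℝ b, ℝ) :=
    { carrier := {f | T (cfcIdMul hsa f) = 0}
      zero_mem' := by simp
      add_mem' := fun {f g} (hf : T _ = 0) (hg : T _ = 0) ↦ by
        change T (cfcIdMul hsa (f + g)) = 0
        rw [map_add, map_add, hf, hg, add_zero]
      smul_mem' := fun g _ hf ↦ apply_cfcIdMul_mul_eq_zero T hsa hf g }
  have hI : IsClosed (I : Set C(quasispectrum ℝ b, ℝ)) :=
    isClosed_eq (hT.comp (cfcIdMul hsa).continuous) continuous_const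
  have hprime (f g : C(quasispectrum ℝ b, ℝ)) (hf : 0 ≤ f) (hg : 0 ≤ g) (hfg : f * g = 0) :
      f ∈ I ∨ g ∈ I :=
    hS _ (orthogonalCone.cfcIdMul_mem hb hf) _ (orthogonalCone.cfcIdMul_mem hb hg)
      (cfcIdMul_mul_cfcIdMul_eq_zero hsa hfg)
  rcases eq_top_or_exists_forall_mem_of_apply_eq_zero hI hprime with htop | ⟨t, ht⟩
  · have h1 : T (cfcIdMul hsa 1) = 0 := (Ideal.eq_top_iff_one I).1 htop
    rw [cfcIdMul_one] at h1
    exact ⟨0, le_rfl, by simp [h1]⟩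
  · refine ⟨t, quasispectrum_nonneg_of_nonneg b hb.1 (t : ℝ) t.2, ?_⟩
    have h := ht ((ContinuousMapZero.id (quasispectrum ℝ b)).toContinuousMap - (t : ℝ) • 1)
      (sub_eq_zero.2 (mul_one (t : ℝ)).symm)
    change T (cfcIdMul hsa _) = 0 at h
    rw [map_sub, map_smul, cfcIdMul_one] at h
    rw [← map_mul, ← cfcIdMul_id hsa, ← apply_real_smul, ← sub_eq_zero, ← map_sub]
    exact h

lemma IsOrthoPrimeOn.exists_idempotent (hT : Continuous T) {S : Set A}
    (hS : IsOrthoPrimeOn T (orthogonalCone S)) {b : A} (hb : b ∈ orthogonalCone S)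
    (hTb : T b ≠ 0) [IsScalarTower ℂ R R] [SMulCommClass ℂ R R] :
    ∃ p ∈ orthogonalCone S, T p ≠ 0 ∧ T p * T p = T p := by
  have hs := orthogonalCone.sqrt_mem hb
  obtain ⟨t, ht, hsq⟩ := hS.exists_apply_mul_self_eq_smul hT hs
  rw [← CFC.sqrt_mul_sqrt_self b hb.1, map_mul, hsq, smul_ne_zero_iff, ofReal_ne_zero] at hTb
  refine ⟨t⁻¹ • CFC.sqrt b, orthogonalCone.smul_mem (inv_nonneg.2 ht) hs, ?_, ?_⟩
  · rw [apply_real_smul]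
    exact smul_ne_zero (by simpa using hTb.1) hTb.2
  · have ht0 : (t : ℂ) ≠ 0 := by simpa using hTb.1
    rw [apply_real_smul, smul_mul_smul_comm, hsq, smul_smul]
    congr 1
    push_cast
    field_simp

lemma exists_nonneg_eq_smul_of_mul_self_eq_smul [IsScalarTower ℂ R R] [SMulCommClass ℂ R R]
    {P U : R} (hP : P ≠ 0) (hPP : P * P = P) (hPU : P * U = U) (hUP : U * P = U) {t s : ℝ}
    (ht : 0 ≤ t) (hUU : U * U = (t : ℂ) • U)
    (hs : (U + P) * (U + P) = (s : ℂ) • (U + P)) : ∃ r : ℝ, 0 ≤ r ∧ U = (r : ℂ) • P := by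
  have hlin : ((t + 2 - s : ℝ) : ℂ) • U = ((s - 1 : ℝ) : ℂ) • P := by
    rw [add_mul, mul_add, mul_add, hUU, hUP, hPU, hPP] at hs
    rw [← sub_eq_zero] at hs ⊢
    rw [← hs]
    push_cast
    module
  have hts : t + 2 - s ≠ 0 := fun h ↦ by
    rw [h, ofReal_zero, zero_smul] at hlin
    have hs1 : s - 1 = 0 := by exact_mod_cast (smul_eq_zero.1 hlin.symm).resolve_right hP
    linarith
  obtain ⟨r, rfl⟩ : ∃ r : ℝ, U = (r : ℂ) • P := by
    refine ⟨(t + 2 - s)⁻¹ * (s - 1), ?_⟩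
    rw [ofReal_mul, mul_smul, ← hlin, smul_smul, ← ofReal_mul, inv_mul_cancel₀ hts, ofReal_one,
      one_smul]
  have hr : r * r = t * r := by
    rw [smul_mul_smul_comm, hPP, smul_smul] at hUU
    exact_mod_cast smul_left_injective ℂ hP hUU
  rcases eq_or_ne r 0 with rfl | hr0
  · exact ⟨0, le_rfl, rfl⟩
  · exact ⟨r, (mul_right_cancel₀ hr0 hr).symm ▸ ht, rfl⟩

lemma IsOrthoPrimeOn.exists_corner_eq_smul [IsScalarTower ℂ R R] [SMulCommClass ℂ R R]
    (hT : Continuous T) {S : Set A} (hS : IsOrthoPrimeOn T (orthogonalCone S)) {p : A}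
    (hp : p ∈ orthogonalCone S) (hTp : T p ≠ 0) (hidem : T p * T p = T p) {y : A} (hy : 0 ≤ y) :
    ∃ r : ℝ, 0 ≤ r ∧ T p * T y * T p = (r : ℂ) • T p := by
  have hu := orthogonalCone.conjugate_mem hp hy
  obtain ⟨t, ht, hUU⟩ := hS.exists_apply_mul_self_eq_smul hT hu
  obtain ⟨s, -, hUP⟩ := hS.exists_apply_mul_self_eq_smul hT (orthogonalCone.add_mem hu hp)
  rw [map_add] at hUP
  rw [← map_mul, ← map_mul]
  refine exists_nonneg_eq_smul_of_mul_self_eq_smul hTp hidem ?_ ?_ ht hUU hUP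
  · rw [map_mul, map_mul, ← mul_assoc, ← mul_assoc, hidem]
  · rw [map_mul, mul_assoc, hidem]

end OrthoPrimeCones

section OrthogonalFamilies

attribute [local instance] IrreducibleRepOn.normH IrreducibleRepOn.ipsH IrreducibleRepOn.csH

/-- All irreducible representations of `A` have dimension at most `n`; a C⋆-algebra is
subhomogeneous when this holds for some `n`. -/
def IrreducibleDimLE (A : Type u) [NonUnitalCStarAlgebra A] (n : ℕ) : Prop :=
  ∀ ρ : IrreducibleRepOn A, FiniteDimensional ℂ ρ.H ∧ Module.finrank ℂ ρ.H ≤ n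

variable {A : Type u} [NonUnitalCStarAlgebra A]
  {R : Type*} [NonUnitalNormedRing R] [NormedSpace ℂ R] {T : A →ₙₐ[ℂ] R}

/-- The kernel of `T` is a prime ideal, in the elementwise form of primeness. -/
def IsPrimeHom (T : A →ₙₐ[ℂ] R) : Prop :=
  ∀ a c, (∀ x, T a * T x * T c = 0) → T a = 0 ∨ T c = 0

lemma IsPrimeHom.exists_forall_irreducibleRepOn (hT : IsPrimeHom T) (hne : ∃ a, T a ≠ 0)
    (S : Finset A) (hS : ∀ a ∈ S, T a ≠ 0) :
    ∃ w, T w ≠ 0 ∧ ∀ ρ : IrreducibleRepOn A, ρ.π w ≠ 0 → ∀ a ∈ S, ρ.π a ≠ 0 := by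
  classical
  induction S using Finset.induction_on with
  | empty =>
    obtain ⟨w, hw⟩ := hne
    exact ⟨w, hw, by simp⟩
  | insert a S _ ih =>
    obtain ⟨w, hw, hρ⟩ := ih fun b hb ↦ hS b (Finset.mem_insert_of_mem hb)
    obtain ⟨x, hx⟩ : ∃ x, T a * T x * T w ≠ 0 := by
      by_contra! h
      exact (hT a w h).elim (hS a (Finset.mem_insert_self a S)) hw
    refine ⟨a * x * w, by rwa [map_mul, map_mul], fun ρ hρw ↦ ?_⟩
    rw [map_mul, map_mul] at hρw
    exact Finset.forall_mem_insert a S _ |>.2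
      ⟨left_ne_zero_of_mul (left_ne_zero_of_mul hρw), hρ ρ (right_ne_zero_of_mul hρw)⟩

lemma IrreducibleRepOn.card_le_finrank (ρ : IrreducibleRepOn A) [FiniteDimensional ℂ ρ.H]
    {S : Finset A} (hsa : ∀ a ∈ S, IsSelfAdjoint a) (hne : ∀ a ∈ S, ρ.π a ≠ 0)
    (hS : (S : Set A).Pairwise fun a b ↦ a * b = 0) : S.card ≤ Module.finrank ℂ ρ.H := by
  have hv (a : S) : ∃ v, ρ.π a v ≠ 0 := by
    by_contra! h
    exact hne a a.2 (ContinuousLinearMap.ext h)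
  choose v hv using hv
  have hli : LinearIndependent ℂ fun a : S ↦ ρ.π a (v a) := by
    refine linearIndependent_of_ne_zero_of_inner_eq_zero hv fun a b hab ↦ ?_
    change ⟪ρ.π a (v a), ρ.π b (v b)⟫_ℂ = 0
    rw [← ContinuousLinearMap.adjoint_inner_right, ← ContinuousLinearMap.star_eq_adjoint,
      ← map_star, (hsa a a.2).star_eq, ← mul_apply_eq_comp, ← map_mul,
      hS a.2 b.2 fun h ↦ hab (Subtype.ext h)]
    simp
  simpa using hli.fintype_card_le_finrank

variable [PartialOrder A]

/-- A finite family of pairwise orthogonal nonnegative elements outside the kernel of `T`. -/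
structure IsOrthogonalFamily (T : A →ₙₐ[ℂ] R) (S : Finset A) : Prop where
  nonneg : ∀ a ∈ S, 0 ≤ a
  map_ne_zero : ∀ a ∈ S, T a ≠ 0
  pairwise : (S : Set A).Pairwise fun a b ↦ a * b = 0

namespace IsOrthogonalFamily

variable {S : Finset A}

lemma mono {S' : Finset A} (hS : IsOrthogonalFamily T S) (h : S' ⊆ S) : IsOrthogonalFamily T S' :=
  ⟨fun a ha ↦ hS.nonneg a (h ha), fun a ha ↦ hS.map_ne_zero a (h ha),
    hS.pairwise.mono (Finset.coe_subset.2 h)⟩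

variable [StarOrderedRing A]

lemma card_le (hS : IsOrthogonalFamily T S) (hT : IsPrimeHom T) {n : ℕ}
    (hA : IrreducibleDimLE A n) : S.card ≤ n := by
  rcases S.eq_empty_or_nonempty with rfl | ⟨a, ha⟩
  · simp
  obtain ⟨w, hw, hρS⟩ :=
    hT.exists_forall_irreducibleRepOn ⟨a, hS.map_ne_zero a ha⟩ S hS.map_ne_zero
  have hw0 : w ≠ 0 := fun h ↦ hw (by rw [h, map_zero])
  obtain ⟨ρ, hρ⟩ := exists_irreducibleRepOn_apply_ne_zero hw0
  have := (hA ρ).1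
  exact (ρ.card_le_finrank (fun a ha ↦ (hS.nonneg a ha).isSelfAdjoint) (hρS ρ hρ)
    hS.pairwise).trans (hA ρ).2

lemma insert [DecidableEq A] (hS : IsOrthogonalFamily T S) {b : A}
    (hb : b ∈ orthogonalCone (S : Set A)) (hTb : T b ≠ 0) :
    IsOrthogonalFamily T (insert b S) where
  nonneg := (Finset.forall_mem_insert b S _).2 ⟨hb.1, hS.nonneg⟩
  map_ne_zero := (Finset.forall_mem_insert b S _).2 ⟨hTb, hS.map_ne_zero⟩
  pairwise := by
    rw [Finset.coe_insert, Set.pairwise_insert]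
    exact ⟨hS.pairwise, fun a ha _ ↦
      ⟨mul_eq_zero_symm_of_nonneg (hS.nonneg a ha) hb.1 (hb.2 a ha), hb.2 a ha⟩⟩

lemma notMem_of_mem_orthogonalCone {S : Set A} {b : A} (hb : b ∈ orthogonalCone S)
    (hTb : T b ≠ 0) : b ∉ S := fun hbS ↦ hTb <| by
  have hbb : star b * b = 0 := by rw [hb.1.isSelfAdjoint.star_eq, hb.2 b hbS]
  rw [(CStarRing.star_mul_self_eq_zero_iff b).1 hbb, map_zero]

lemma isOrthoPrimeOn_erase [DecidableEq A] (hS : IsOrthogonalFamily T S)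
    (hmax : ∀ S', IsOrthogonalFamily T S' → S'.card ≤ S.card) {a : A} (ha : a ∈ S) :
    IsOrthoPrimeOn T (orthogonalCone (S.erase a : Set A)) := by
  intro b hb c hc hbc
  by_contra! h
  obtain ⟨hTb, hTc⟩ := h
  have hc' : c ∈ orthogonalCone (Insert.insert b (S.erase a) : Finset A) :=
    ⟨hc.1, (Finset.forall_mem_insert _ _ _).2 ⟨hbc, hc.2⟩⟩
  have hcard := hmax _ (((hS.mono (S.erase_subset a)).insert hb hTb).insert hc' hTc)
  rw [Finset.card_insert_of_notMem (notMem_of_mem_orthogonalCone hc' hTc),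
    Finset.card_insert_of_notMem (notMem_of_mem_orthogonalCone hb hTb),
    ← Finset.card_erase_add_one ha] at hcard
  lia

lemma exists_maximal (hT : IsPrimeHom T) {n : ℕ} (hA : IrreducibleDimLE A n) :
    ∃ S, IsOrthogonalFamily T S ∧ ∀ S', IsOrthogonalFamily T S' → S'.card ≤ S.card := by
  have hbdd : BddAbove (Finset.card '' {S | IsOrthogonalFamily T S}) := by
    refine ⟨n, ?_⟩
    rintro _ ⟨S, hS, rfl⟩
    exact hS.card_le hT hA
  have hempty : IsOrthogonalFamily T ∅ := ⟨by simp, by simp, by simp⟩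
  obtain ⟨S, hS, hcard⟩ := Nat.sSup_mem (Set.Nonempty.image _ ⟨∅, hempty⟩) hbdd
  exact ⟨S, hS, fun S' hS' ↦ hcard ▸ le_csSup hbdd ⟨S', hS', rfl⟩⟩

end IsOrthogonalFamily

variable [StarOrderedRing A]

lemma exists_nonneg_apply_ne_zero (hT : ∃ a, T a ≠ 0) : ∃ b, 0 ≤ b ∧ T b ≠ 0 := by
  by_contra! h
  obtain ⟨a, ha⟩ := hT
  have hzero : (T : A →ₗ[ℂ] R) = 0 := LinearMap.ext_on CStarAlgebra.span_nonneg h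
  exact ha (LinearMap.congr_fun hzero a)

lemma exists_isOrthoPrimeOn_orthogonalCone (hT : IsPrimeHom T) (hne : ∃ a, T a ≠ 0) {n : ℕ}
    (hA : IrreducibleDimLE A n) :
    ∃ S : Set A, IsOrthoPrimeOn T (orthogonalCone S) ∧ ∃ b ∈ orthogonalCone S, T b ≠ 0 := by
  classical
  obtain ⟨S, hS, hmax⟩ := IsOrthogonalFamily.exists_maximal hT hA
  obtain ⟨b, hb, hTb⟩ := exists_nonneg_apply_ne_zero hne
  have hSne : S.Nonempty := by
    have := hmax {b} ⟨by simpa, by simpa, by simp⟩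
    exact Finset.card_pos.1 (by simpa using this)
  obtain ⟨a, ha⟩ := hSne
  refine ⟨S.erase a, hS.isOrthoPrimeOn_erase hmax ha, a, ⟨hS.nonneg a ha, fun z hz ↦ ?_⟩,
    hS.map_ne_zero a ha⟩
  exact hS.pairwise (Finset.mem_of_mem_erase hz) ha (Finset.ne_of_mem_erase hz)

end OrthogonalFamilies

section MinimalProjections

variable {A : Type u} [NonUnitalCStarAlgebra A] [PartialOrder A] [StarOrderedRing A]
  {R : Type*} [NonUnitalNormedRing R] [NormedSpace ℂ R] {T : A →ₙₐ[ℂ] R}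

/-- The image of `p` under `T` is a minimal projection of the image of `T`: its corner is
one-dimensional, with coordinate the positive functional `ω`. -/
structure IsMinimalProjection (T : A →ₙₐ[ℂ] R) (p : A) (ω : A →ₚ[ℂ] ℂ) : Prop where
  nonneg : 0 ≤ p
  map_ne_zero : T p ≠ 0
  map_mul_self : T p * T p = T p
  corner : ∀ y, T p * T y * T p = ω y • T p

lemma exists_positiveLinearMap_eq_smul (φ : A →ₗ[ℂ] R) {e : R} (he : e ≠ 0)
    (h : ∀ y, 0 ≤ y → ∃ r : ℝ, 0 ≤ r ∧ φ y = (r : ℂ) • e) :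
    ∃ ω : A →ₚ[ℂ] ℂ, ∀ y, φ y = ω y • e := by
  have hmem (y : A) : φ y ∈ ℂ ∙ e := by
    have hspan : Submodule.span ℂ {y : A | 0 ≤ y} ≤ (ℂ ∙ e).comap φ := by
      refine Submodule.span_le.2 fun y hy ↦ ?_
      obtain ⟨r, -, hr⟩ := h y hy
      exact Submodule.mem_span_singleton.2 ⟨r, hr.symm⟩
    exact hspan (CStarAlgebra.span_nonneg (A := A) ▸ Submodule.mem_top)
  let ψ : A →ₗ[ℂ] ℂ :=
    (LinearEquiv.toSpanNonzeroSingleton ℂ R e he).symm ∘ₗ φ.codRestrict (ℂ ∙ e) hmem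
  have hψ (y : A) : φ y = ψ y • e :=
    congrArg Subtype.val
      ((LinearEquiv.toSpanNonzeroSingleton ℂ R e he).apply_symm_apply ⟨φ y, hmem y⟩).symm
  refine ⟨.mk₀ ψ fun y hy ↦ ?_, hψ⟩
  obtain ⟨r, hr, hy⟩ := h y hy
  rw [hψ y] at hy
  rw [smul_left_injective ℂ he hy]
  exact_mod_cast hr

lemma exists_isMinimalProjection [IsScalarTower ℂ R R] [SMulCommClass ℂ R R]
    (hcont : Continuous T) (hT : IsPrimeHom T)
    (hne : ∃ a, T a ≠ 0) {n : ℕ} (hA : IrreducibleDimLE A n) :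
    ∃ p ω, IsMinimalProjection T p ω := by
  obtain ⟨S, hS, b, hb, hTb⟩ := exists_isOrthoPrimeOn_orthogonalCone hT hne hA
  obtain ⟨p, hp, hTp, hidem⟩ := hS.exists_idempotent hcont hb hTb
  let φ : A →ₗ[ℂ] R :=
    LinearMap.mulRight ℂ (T p) ∘ₗ LinearMap.mulLeft ℂ (T p) ∘ₗ (T : A →ₗ[ℂ] R)
  obtain ⟨ω, hω⟩ := exists_positiveLinearMap_eq_smul φ hTp fun y hy ↦
    hS.exists_corner_eq_smul hcont hp hTp hidem hy
  exact ⟨p, ω, hp.1, hTp, hidem, hω⟩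

end MinimalProjections

section RankOneRepresentations

open InnerProductSpace

variable {A H : Type*} [NonUnitalSemiring A] [StarRing A] [Module ℂ A]
  [NormedAddCommGroup H] [InnerProductSpace ℂ H] [CompleteSpace H]
  {π : A →⋆ₙₐ[ℂ] (H →L[ℂ] H)} {p : A} {ξ : H}

lemma eq_bot_or_eq_top_of_rankOne (hξ : DenseRange fun a ↦ π a ξ) (hp : π p = rankOne ℂ ξ ξ)
    {S : Submodule ℂ H} (hS : IsClosed (S : Set H)) (hinv : ∀ a, ∀ v ∈ S, π a v ∈ S) :
    S = ⊥ ∨ S = ⊤ := by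
  by_cases h : ξ ∈ S
  · exact .inr (Submodule.eq_top_iff'.2 fun v ↦
      closure_minimal (Set.range_subset_iff.2 fun a ↦ hinv a ξ h) hS (hξ v))
  · refine .inl ((Submodule.eq_bot_iff S).2 fun v hv ↦ hξ.eq_zero_of_inner_right ℂ fun a ↦ ?_)
    have hmem : ⟪ξ, π (star a) v⟫_ℂ • ξ ∈ S := by
      rw [← rankOne_apply, ← hp]
      exact hinv p _ (hinv _ v hv)
    by_contra hne
    rw [map_star, ContinuousLinearMap.star_eq_adjoint, ContinuousLinearMap.adjoint_inner_right,
      S.smul_mem_iff hne] at hmem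
    exact h hmem

lemma exists_apply_eq_rankOne (hξ : Function.Surjective fun a ↦ π a ξ)
    (hp : π p = rankOne ℂ ξ ξ) (v w : H) : ∃ a, π a = rankOne ℂ v w := by
  obtain ⟨x, rfl⟩ := hξ v
  obtain ⟨y, rfl⟩ := hξ w
  refine ⟨x * p * star y, ?_⟩
  rw [map_mul, map_mul, hp, map_star, ContinuousLinearMap.star_eq_adjoint,
    ContinuousLinearMap.mul_def, ContinuousLinearMap.mul_def, comp_rankOne, rankOne_comp,
    ContinuousLinearMap.adjoint_adjoint]

lemma surjective_of_rankOne [FiniteDimensional ℂ H] (hξ : DenseRange fun a ↦ π a ξ)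
    (hp : π p = rankOne ℂ ξ ξ) : Function.Surjective π := by
  have hsurj : Function.Surjective fun a ↦ π a ξ := by
    let orbit : A →ₗ[ℂ] H := (ContinuousLinearMap.apply ℂ H ξ : (H →L[ℂ] H) →ₗ[ℂ] H) ∘ₗ
      (π : A →ₗ[ℂ] (H →L[ℂ] H))
    have hclosed : IsClosed (Set.range orbit) := (LinearMap.range orbit).closed_of_finiteDimensional
    exact Set.range_eq_univ.1 (hclosed.closure_eq ▸ hξ.closure_range)
  intro f
  let b := stdOrthonormalBasis ℂ H
  choose a ha using fun i ↦ exists_apply_eq_rankOne hsurj hp (f (b i)) (b i)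
  refine ⟨∑ i, a i, ?_⟩
  simp only [map_sum, ha, ← comp_rankOne, ← ContinuousLinearMap.comp_finsetSum]
  rw [b.sum_rankOne_eq_id, ContinuousLinearMap.comp_id]

end RankOneRepresentations

/-- Operators on a finite-dimensional Hilbert space, as a matrix algebra. -/
def operatorStarAlgEquivCStarMatrix (H : Type*) [NormedAddCommGroup H] [InnerProductSpace ℂ H]
    [FiniteDimensional ℂ H] [CompleteSpace H] :
    (H →L[ℂ] H) ≃⋆ₐ[ℂ] CStarMatrix (Fin (Module.finrank ℂ H)) (Fin (Module.finrank ℂ H)) ℂ :=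
  ((stdOrthonormalBasis ℂ H).repr.conjStarAlgEquiv.trans Matrix.toEuclideanCLM.symm).trans
    CStarMatrix.ofMatrixStarAlgEquiv

section MinimalProjectionRepresentation

variable {A : Type u} [NonUnitalCStarAlgebra A] [PartialOrder A]
  {R : Type*} [NonUnitalNormedRing R] [NormedSpace ℂ R] {T : A →ₙₐ[ℂ] R} {p : A}
  {ω : A →ₚ[ℂ] ℂ}

lemma IsMinimalProjection.eq_of_smul_eq (hp : IsMinimalProjection T p ω) {c d : ℂ}
    (h : c • T p = d • T p) : c = d :=
  smul_left_injective ℂ hp.map_ne_zero h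

lemma IsMinimalProjection.apply_mul_left (hp : IsMinimalProjection T p ω) (y : A) :
    ω (p * y) = ω y :=
  hp.eq_of_smul_eq <| by rw [← hp.corner, ← hp.corner, map_mul, ← mul_assoc, hp.map_mul_self]

variable [StarOrderedRing A]

/-- The image of `a` in the Gelfand–Naimark–Segal space of `ω`. -/
def gnsVector (ω : A →ₚ[ℂ] ℂ) : A →ₗ[ℂ] ω.GNS :=
  (UniformSpace.Completion.toComplL : ω.PreGNS →L[ℂ] ω.GNS).toLinearMap ∘ₗ ω.toPreGNS.toLinearMap

lemma denseRange_gnsVector (ω : A →ₚ[ℂ] ℂ) : DenseRange (gnsVector ω) :=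
  UniformSpace.Completion.denseRange_coe.comp ω.toPreGNS.surjective.denseRange
    (UniformSpace.Completion.continuous_coe _)

lemma inner_gnsVector (ω : A →ₚ[ℂ] ℂ) (a b : A) :
    ⟪gnsVector ω a, gnsVector ω b⟫_ℂ = ω (star a * b) :=
  UniformSpace.Completion.inner_coe _ _

lemma gnsNonUnitalStarAlgHom_apply_gnsVector (ω : A →ₚ[ℂ] ℂ) (a b : A) :
    ω.gnsNonUnitalStarAlgHom a (gnsVector ω b) = gnsVector ω (a * b) := by
  simp [gnsVector]

namespace IsMinimalProjection

lemma gnsVector_eq_of_mul_eq (hp : IsMinimalProjection T p ω) {y z : A}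
    (h : T y * T p = T z * T p) : gnsVector ω y = gnsVector ω z := by
  rw [← sub_eq_zero, ← map_sub, ← inner_self_eq_zero (𝕜 := ℂ), inner_gnsVector]
  refine hp.eq_of_smul_eq ?_
  rw [← hp.corner, map_mul, mul_assoc, mul_assoc, map_sub T y z, sub_mul, h, sub_self, mul_zero,
    mul_zero, zero_smul]

lemma gns_apply_gnsVector_self (hp : IsMinimalProjection T p ω) (a : A) :
    ω.gnsNonUnitalStarAlgHom a (gnsVector ω p) = gnsVector ω a := by
  rw [gnsNonUnitalStarAlgHom_apply_gnsVector]
  exact hp.gnsVector_eq_of_mul_eq (by rw [map_mul, mul_assoc, hp.map_mul_self])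

lemma apply_eq_zero_of_gns_eq_zero (hp : IsMinimalProjection T p ω) (hT : IsPrimeHom T) {y : A}
    (hy : ω.gnsNonUnitalStarAlgHom y = 0) : T y = 0 := by
  have hω (z x : A) : ω (z * (y * x)) = 0 := by
    rw [← star_star z, ← inner_gnsVector, ← gnsNonUnitalStarAlgHom_apply_gnsVector, hy]
    simp
  refine (hT y p fun x ↦ ?_).resolve_right hp.map_ne_zero
  rw [← map_mul, ← map_mul]
  refine (hT p _ fun z ↦ ?_).resolve_left hp.map_ne_zero
  rw [map_mul T (y * x), ← mul_assoc, mul_assoc (T p), ← map_mul, hp.corner, hω, zero_smul]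

variable [IsScalarTower ℂ R R]

lemma gns_eq_rankOne (hp : IsMinimalProjection T p ω) :
    ω.gnsNonUnitalStarAlgHom p = InnerProductSpace.rankOne ℂ (gnsVector ω p) (gnsVector ω p) := by
  refine ContinuousLinearMap.ext fun v ↦ congrFun ((denseRange_gnsVector ω).equalizer
    (ContinuousLinearMap.continuous _) (ContinuousLinearMap.continuous _) (funext fun y ↦ ?_)) v
  simp only [Function.comp_apply, InnerProductSpace.rankOne_apply, inner_gnsVector,
    hp.nonneg.isSelfAdjoint.star_eq, hp.apply_mul_left, gnsNonUnitalStarAlgHom_apply_gnsVector]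
  rw [← map_smul]
  refine hp.gnsVector_eq_of_mul_eq ?_
  rw [map_mul, hp.corner, map_smul, smul_mul_assoc, hp.map_mul_self]

lemma gns_apply_ne_zero (hp : IsMinimalProjection T p ω) : ω.gnsNonUnitalStarAlgHom p ≠ 0 := by
  have hω : ω p = 1 := hp.eq_of_smul_eq <| by
    rw [← hp.corner, hp.map_mul_self, hp.map_mul_self, one_smul]
  have hinner : ⟪gnsVector ω p, gnsVector ω p⟫_ℂ = 1 := by
    rw [inner_gnsVector, hp.nonneg.isSelfAdjoint.star_eq, hp.apply_mul_left, hω]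
  have hne : gnsVector ω p ≠ 0 := fun h ↦ by simp [h] at hinner
  exact hp.gns_eq_rankOne ▸ InnerProductSpace.rankOne_ne_zero hne hne

/-- The irreducible representation attached to a minimal projection of the image of `T`. -/
def irreducibleRepOn (hp : IsMinimalProjection T p ω) : IrreducibleRepOn A where
  H := ω.GNS
  π := ω.gnsNonUnitalStarAlgHom
  continuous := by
    let : CStarAlgebra (ω.GNS →L[ℂ] ω.GNS) := {}
    exact AddMonoidHomClass.continuous_of_bound _ 1 fun a ↦ by
      rw [one_mul]
      exact NonUnitalStarAlgHom.norm_apply_le _ a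
  nonzero := ⟨p, hp.gns_apply_ne_zero⟩
  irreducible _ hS hinv := eq_bot_or_eq_top_of_rankOne
    (by simpa only [hp.gns_apply_gnsVector_self] using denseRange_gnsVector ω) hp.gns_eq_rankOne
    hS hinv

end IsMinimalProjection

lemma exists_surjective_starAlgHom_matrix_of_isPrimeHom [IsScalarTower ℂ R R] [SMulCommClass ℂ R R]
    (hcont : Continuous T) (hT : IsPrimeHom T) (hne : ∃ a, T a ≠ 0) {n : ℕ}
    (hA : IrreducibleDimLE A n) :
    ∃ (k : ℕ) (ρ : A →⋆ₙₐ[ℂ] CStarMatrix (Fin k) (Fin k) ℂ), Function.Surjective ρ ∧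
      ∀ a, ρ a = 0 → T a = 0 := by
  obtain ⟨p, ω, hp⟩ := exists_isMinimalProjection hcont hT hne hA
  have : FiniteDimensional ℂ ω.GNS := (hA hp.irreducibleRepOn).1
  let e := operatorStarAlgEquivCStarMatrix ω.GNS
  refine ⟨_, (NonUnitalStarAlgHomClass.toNonUnitalStarAlgHom e).comp ω.gnsNonUnitalStarAlgHom,
    ?_, fun a ha ↦ ?_⟩
  · exact e.surjective.comp (surjective_of_rankOne
      (by simpa only [hp.gns_apply_gnsVector_self] using denseRange_gnsVector ω) hp.gns_eq_rankOne)
  · exact hp.apply_eq_zero_of_gns_eq_zero hT (e.injective (ha.trans (map_zero e).symm))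

end MinimalProjectionRepresentation

section MatrixAmplifications

lemma norm_toCStarModule_smul_one_le {m D : Type*} [Fintype m] [CStarAlgebra D] [PartialOrder D]
    [StarOrderedRing D] (α : m → ℂ) :
    ‖(WithCStarModule.equiv D (m → D)).symm fun i ↦ α i • (1 : D)‖ ≤ √(∑ i, ‖α i‖ ^ 2) := by
  rw [WithCStarModule.pi_norm]
  refine Real.sqrt_le_sqrt (norm_sum_le_of_le _ fun i _ ↦ ?_)
  rw [WithCStarModule.equiv_symm_pi_apply, WithCStarModule.inner_def, CStarRing.norm_self_mul_star,
    ← sq]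
  have h : ‖α i • (1 : D)‖ ≤ ‖α i‖ := by
    rw [norm_smul]
    exact mul_le_of_le_one_right (norm_nonneg _) (IsStarProjection.one D).norm_le
  gcongr

lemma norm_sum_sum_smul_le {m D : Type*} [Fintype m] [CStarAlgebra D] [PartialOrder D]
    [StarOrderedRing D] (α β : m → ℂ) (M : CStarMatrix m m D) :
    ‖∑ i, ∑ j, (α i * β j) • M i j‖ ≤ √(∑ i, ‖α i‖ ^ 2) * ‖M‖ * √(∑ j, ‖β j‖ ^ 2) := by
  let v := (WithCStarModule.equiv D (m → D)).symm fun i ↦ α i • (1 : D)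
  let w := (WithCStarModule.equiv D (m → D)).symm fun j ↦ star (β j) • (1 : D)
  have hinner : inner D w (CStarMatrix.toCLM M v) = ∑ i, ∑ j, (α i * β j) • M i j := by
    rw [Finset.sum_comm]
    simp [v, w, WithCStarModule.pi_inner, WithCStarModule.inner_def,
      CStarMatrix.toCLM_apply_eq_sum, Finset.smul_sum, smul_smul, mul_comm]
  have hv : ‖v‖ ≤ √(∑ i, ‖α i‖ ^ 2) := norm_toCStarModule_smul_one_le α
  have hw : ‖w‖ ≤ √(∑ j, ‖β j‖ ^ 2) :=
    (norm_toCStarModule_smul_one_le _).trans_eq (by simp only [norm_star])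
  calc ‖∑ i, ∑ j, (α i * β j) • M i j‖
      ≤ ‖w‖ * ‖CStarMatrix.toCLM M v‖ := hinner ▸ CStarModule.norm_inner_le _
    _ ≤ ‖w‖ * (‖M‖ * ‖v‖) := by gcongr; exact (CStarMatrix.toCLM M).le_opNorm v
    _ ≤ √(∑ j, ‖β j‖ ^ 2) * (‖M‖ * √(∑ i, ‖α i‖ ^ 2)) := by gcongr
    _ = √(∑ i, ‖α i‖ ^ 2) * ‖M‖ * √(∑ j, ‖β j‖ ^ 2) := by ring

/-- The diagonal matrix with constant entry, as a `*`-homomorphism. -/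
def diagonalConst (n D : Type*) [Fintype n] [DecidableEq n] [NonUnitalSemiring D] [StarRing D]
    [Module ℂ D] : D →⋆ₙₐ[ℂ] CStarMatrix n n D where
  toFun a := CStarMatrix.ofMatrix (Matrix.diagonal fun _ ↦ a)
  map_smul' c a := Matrix.diagonal_smul c fun _ ↦ a
  map_zero' := Matrix.diagonal_zero
  map_add' a b := (Matrix.diagonal_add (fun _ ↦ a) fun _ ↦ b).symm
  map_mul' a b := (Matrix.diagonal_mul_diagonal (fun _ ↦ a) fun _ ↦ b).symm
  map_star' a := (Matrix.diagonal_conjTranspose fun _ ↦ a).symm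

/-- The block-diagonal matrix `v ⊗ 1` with constant blocks `v`, as a `*`-homomorphism. -/
def blockDiagonalConst (m o D : Type*) [Fintype m] [Fintype o] [DecidableEq o]
    [NonUnitalSemiring D] [StarRing D] [Module ℂ D] :
    CStarMatrix m m D →⋆ₙₐ[ℂ] CStarMatrix (m × o) (m × o) D where
  toFun v := CStarMatrix.ofMatrix (Matrix.blockDiagonal fun _ ↦ CStarMatrix.ofMatrix.symm v)
  map_smul' c v := Matrix.blockDiagonal_smul c fun _ ↦ CStarMatrix.ofMatrix.symm v
  map_zero' := Matrix.blockDiagonal_zero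
  map_add' v w := Matrix.blockDiagonal_add (fun _ ↦ CStarMatrix.ofMatrix.symm v)
    fun _ ↦ CStarMatrix.ofMatrix.symm w
  map_mul' v w := Matrix.blockDiagonal_mul (fun _ ↦ CStarMatrix.ofMatrix.symm v)
    fun _ ↦ CStarMatrix.ofMatrix.symm w
  map_star' v := (Matrix.blockDiagonal_conjTranspose fun _ ↦ CStarMatrix.ofMatrix.symm v).symm

lemma norm_sum_sum_smul_mul_le {A B D m n : Type*} [NonUnitalCStarAlgebra A] [PartialOrder A]
    [StarOrderedRing A] [NonUnitalCStarAlgebra B] [PartialOrder B] [StarOrderedRing B]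
    [CStarAlgebra D] [PartialOrder D] [StarOrderedRing D] [Fintype m] [Fintype n]
    (f : A →⋆ₙₐ[ℂ] D) (g : B →⋆ₙₐ[ℂ] D) (α β : m × n → ℂ) (v : CStarMatrix m m A)
    (w : CStarMatrix n n B) :
    ‖∑ i, ∑ j, (α i * β j) • (f (v i.1 j.1) * g (w i.2 j.2))‖ ≤
      √(∑ i, ‖α i‖ ^ 2) * ‖v‖ * ‖w‖ * √(∑ j, ‖β j‖ ^ 2) := by
  classical
  let F : CStarMatrix m m A →⋆ₙₐ[ℂ] CStarMatrix (m × n) (m × n) D :=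
    (blockDiagonalConst m n D).comp (CStarMatrix.mapₙₐ f)
  let G : CStarMatrix n n B →⋆ₙₐ[ℂ] CStarMatrix (m × n) (m × n) D :=
    (NonUnitalStarAlgHomClass.toNonUnitalStarAlgHom
      (CStarMatrix.reindexₐ ℂ D (Equiv.prodComm n m))).comp
      ((blockDiagonalConst n m D).comp (CStarMatrix.mapₙₐ g))
  have hFG (i j : m × n) : (F v * G w) i j = f (v i.1 j.1) * g (w i.2 j.2) := by
    rw [CStarMatrix.mul_apply, Fintype.sum_prod_type]
    change ∑ x, ∑ y, (if i.2 = y then f (v i.1 x) else 0) * (if x = j.1 then g (w y j.2) else 0) = _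
    simp
  simp_rw [← hFG]
  refine (norm_sum_sum_smul_le α β _).trans ?_
  rw [mul_assoc (√_) ‖v‖]
  gcongr
  exact (norm_mul_le _ _).trans (by gcongr <;> exact NonUnitalStarAlgHom.norm_apply_le _ _)

end MatrixAmplifications

section SliceMap

variable {A B : Type*} [NonUnitalSemiring A] [StarRing A] [Module ℂ A] [AddCommMonoid B]
  [Module ℂ B] {n : Type*} [Fintype n]

variable (B) in
/-- The slice map `a ⊗ b ↦ (ρ(a)ᵢⱼ b)ᵢⱼ` of a matrix representation `ρ`. -/
def sliceMap (ρ : A →⋆ₙₐ[ℂ] CStarMatrix n n ℂ) : A ⊗[ℂ] B →ₗ[ℂ] CStarMatrix n n B :=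
  TensorProduct.lift <| LinearMap.mk₂ ℂ (fun a b ↦ (ρ a).map (· • b))
    (fun a a' b ↦ by ext; simp [add_smul]) (fun c a b ↦ by ext; simp [mul_smul])
    (fun a b b' ↦ by ext; simp) (fun c a b ↦ by ext; exact smul_comm _ _ _)

lemma sliceMap_tmul_apply (ρ : A →⋆ₙₐ[ℂ] CStarMatrix n n ℂ) (a : A) (b : B) (i j : n) :
    sliceMap B ρ (a ⊗ₜ b) i j = ρ a i j • b :=
  rfl

end SliceMap

section OsProjNorm

variable {A B : Type u} [NonUnitalCStarAlgebra A] [NonUnitalCStarAlgebra B]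
  {NA : ∀ p : ℕ, Matrix (Fin p) (Fin p) A → ℝ} {NB : ∀ q : ℕ, Matrix (Fin q) (Fin q) B → ℝ}

/-- The element `α (v ⊗ w) β` of the algebraic tensor product. -/
def matrixTensor {m n : Type*} [Fintype m] [Fintype n] (α : m × n → ℂ) (v : Matrix m m A)
    (w : Matrix n n B) (β : m × n → ℂ) : A ⊗[ℂ] B :=
  ∑ i, ∑ j, (α i * β j) • (v i.1 j.1 ⊗ₜ[ℂ] w i.2 j.2)

lemma exists_eq_matrixTensor (u : A ⊗[ℂ] B) : ∃ (n : ℕ) (α : Fin n × Fin n → ℂ)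
    (v : Matrix (Fin n) (Fin n) A) (w : Matrix (Fin n) (Fin n) B) (β : Fin n × Fin n → ℂ),
    u = matrixTensor α v w β := by
  obtain ⟨n, a, b, rfl⟩ := TensorProduct.exists_sum_tmul_eq u
  let δ : Fin n × Fin n → ℂ := fun i ↦ if i.1 = i.2 then 1 else 0
  refine ⟨n, δ, .diagonal a, .diagonal b, δ, ?_⟩
  simp [matrixTensor, δ, Fintype.sum_prod_type, Matrix.diagonal_apply, TensorProduct.ite_tmul]

lemma osProjNorm_matrixTensor_le (hNA : ∀ p, IsCStarNorm (NA p)) (hNB : ∀ q, IsCStarNorm (NB q))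
    {p q : ℕ} (α : Fin p × Fin q → ℂ) (v : Matrix (Fin p) (Fin p) A)
    (w : Matrix (Fin q) (Fin q) B) (β : Fin p × Fin q → ℂ) :
    osProjNorm NA NB (matrixTensor α v w β) ≤
      √(∑ i, ‖α i‖ ^ 2) * NA p v * NB q w * √(∑ j, ‖β j‖ ^ 2) := by
  refine csInf_le ⟨0, ?_⟩ ⟨p, q, α, v, w, β, rfl, rfl⟩
  rintro - ⟨p, q, α, v, w, β, -, rfl⟩
  have := (hNA p).nonneg v
  have := (hNB q).nonneg w
  positivity

lemma le_mul_osProjNorm (f : A ⊗[ℂ] B → ℝ) {C : ℝ} (hC : 0 ≤ C)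
    (h : ∀ {p q : ℕ} (α : Fin p × Fin q → ℂ) (v : Matrix (Fin p) (Fin p) A)
      (w : Matrix (Fin q) (Fin q) B) (β : Fin p × Fin q → ℂ), f (matrixTensor α v w β) ≤
        C * (√(∑ i, ‖α i‖ ^ 2) * NA p v * NB q w * √(∑ j, ‖β j‖ ^ 2))) (u : A ⊗[ℂ] B) :
    f u ≤ C * osProjNorm NA NB u := by
  obtain ⟨n, α, v, w, β, hu⟩ := exists_eq_matrixTensor u
  rw [osProjNorm, ← smul_eq_mul, ← Real.sInf_smul_of_nonneg hC]
  refine le_csInf (Set.Nonempty.smul_set ⟨_, n, n, α, v, w, β, hu, rfl⟩) ?_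
  rintro - ⟨-, ⟨p, q, α, v, w, β, rfl, rfl⟩, rfl⟩
  exact h α v w β

section

variable [PartialOrder A] [StarOrderedRing A]

lemma IsCStarNorm.apply_diagonal_le {n : Type*} [Fintype n] [DecidableEq n] {N : Matrix n n A → ℝ}
    (hN : IsCStarNorm N) (a : A) : N (.diagonal fun _ ↦ a) ≤ ‖a‖ := by
  rw [hN.matrix_eq_norm_ofMatrix]
  exact NonUnitalStarAlgHom.norm_apply_le (diagonalConst n A) a

lemma osProjNorm_rTensor_mulLeft_le (hNA : ∀ p, IsCStarNorm (NA p)) (hNB : ∀ q, IsCStarNorm (NB q))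
    (a : A) (u : A ⊗[ℂ] B) :
    osProjNorm NA NB ((LinearMap.mulLeft ℂ a).rTensor B u) ≤ ‖a‖ * osProjNorm NA NB u := by
  refine le_mul_osProjNorm (fun u ↦ osProjNorm NA NB ((LinearMap.mulLeft ℂ a).rTensor B u))
    (norm_nonneg a) (fun {p q} α v w β ↦ ?_) u
  have h : (LinearMap.mulLeft ℂ a).rTensor B (matrixTensor α v w β) =
      matrixTensor α ((Matrix.diagonal fun _ ↦ a) * v) w β := by
    simp [matrixTensor]
  have hv : NA p ((Matrix.diagonal fun _ ↦ a) * v) ≤ ‖a‖ * NA p v :=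
    ((hNA p).mul_le _ v).trans (mul_le_mul_of_nonneg_right ((hNA p).apply_diagonal_le a)
      ((hNA p).nonneg v))
  have := (hNB q).nonneg w
  calc osProjNorm NA NB ((LinearMap.mulLeft ℂ a).rTensor B (matrixTensor α v w β))
      ≤ √(∑ i, ‖α i‖ ^ 2) * (‖a‖ * NA p v) * NB q w * √(∑ j, ‖β j‖ ^ 2) := by
        rw [h]
        exact (osProjNorm_matrixTensor_le hNA hNB ..).trans (by gcongr)
    _ = ‖a‖ * (√(∑ i, ‖α i‖ ^ 2) * NA p v * NB q w * √(∑ j, ‖β j‖ ^ 2)) := by ring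

end

section

variable [PartialOrder B] [StarOrderedRing B]

lemma osProjNorm_lTensor_mulLeft_le (hNA : ∀ p, IsCStarNorm (NA p)) (hNB : ∀ q, IsCStarNorm (NB q))
    (b : B) (u : A ⊗[ℂ] B) :
    osProjNorm NA NB ((LinearMap.mulLeft ℂ b).lTensor A u) ≤ ‖b‖ * osProjNorm NA NB u := by
  refine le_mul_osProjNorm (fun u ↦ osProjNorm NA NB ((LinearMap.mulLeft ℂ b).lTensor A u))
    (norm_nonneg b) (fun {p q} α v w β ↦ ?_) u
  have h : (LinearMap.mulLeft ℂ b).lTensor A (matrixTensor α v w β) =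
      matrixTensor α v ((Matrix.diagonal fun _ ↦ b) * w) β := by
    simp [matrixTensor]
  have hw : NB q ((Matrix.diagonal fun _ ↦ b) * w) ≤ ‖b‖ * NB q w :=
    ((hNB q).mul_le _ w).trans (mul_le_mul_of_nonneg_right ((hNB q).apply_diagonal_le b)
      ((hNB q).nonneg w))
  have := (hNA p).nonneg v
  calc osProjNorm NA NB ((LinearMap.mulLeft ℂ b).lTensor A (matrixTensor α v w β))
      ≤ √(∑ i, ‖α i‖ ^ 2) * NA p v * (‖b‖ * NB q w) * √(∑ j, ‖β j‖ ^ 2) := by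
        rw [h]
        exact (osProjNorm_matrixTensor_le hNA hNB ..).trans (by gcongr)
    _ = ‖b‖ * (√(∑ i, ‖α i‖ ^ 2) * NA p v * NB q w * √(∑ j, ‖β j‖ ^ 2)) := by ring

end

variable [PartialOrder A] [StarOrderedRing A] [PartialOrder B] [StarOrderedRing B]

lemma osProjNorm_tmul_le (hNA : ∀ p, IsCStarNorm (NA p)) (hNB : ∀ q, IsCStarNorm (NB q)) (a : A)
    (b : B) : osProjNorm NA NB (a ⊗ₜ b) ≤ ‖a‖ * ‖b‖ := by
  have h := osProjNorm_matrixTensor_le hNA hNB (fun _ : Fin 1 × Fin 1 ↦ 1) (.diagonal fun _ ↦ a)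
    (.diagonal fun _ ↦ b) fun _ ↦ 1
  have h_eq : matrixTensor (fun _ : Fin 1 × Fin 1 ↦ 1) (.diagonal fun _ ↦ a)
      (.diagonal fun _ ↦ b) (fun _ ↦ 1) = a ⊗ₜ[ℂ] b := by
    simp [matrixTensor, Fintype.sum_prod_type]
  rw [h_eq] at h
  refine h.trans ?_
  simpa using mul_le_mul ((hNA 1).apply_diagonal_le a) ((hNB 1).apply_diagonal_le b)
    ((hNB 1).nonneg _) (norm_nonneg a)

lemma norm_mul'_map_le_osProjNorm (hNA : ∀ p, IsCStarNorm (NA p)) (hNB : ∀ q, IsCStarNorm (NB q))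
    {D : Type*} [CStarAlgebra D] (f : A →⋆ₙₐ[ℂ] D) (g : B →⋆ₙₐ[ℂ] D) (u : A ⊗[ℂ] B) :
    ‖LinearMap.mul' ℂ D (TensorProduct.map (f : A →ₗ[ℂ] D) (g : B →ₗ[ℂ] D) u)‖ ≤
      osProjNorm NA NB u := by
  let := CStarAlgebra.spectralOrder D
  have := CStarAlgebra.spectralOrderedRing D
  rw [← one_mul (osProjNorm NA NB u)]
  refine le_mul_osProjNorm (fun u ↦ ‖LinearMap.mul' ℂ D (TensorProduct.map (f : A →ₗ[ℂ] D)
    (g : B →ₗ[ℂ] D) u)‖) zero_le_one (fun {p q} α v w β ↦ ?_) u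
  rw [one_mul, (hNA p).matrix_eq_norm_ofMatrix, (hNB q).matrix_eq_norm_ofMatrix]
  simpa [matrixTensor] using norm_sum_sum_smul_mul_le f g α β (.ofMatrix v) (.ofMatrix w)

lemma norm_sliceMap_le (hNA : ∀ p, IsCStarNorm (NA p)) (hNB : ∀ q, IsCStarNorm (NB q))
    {n : Type*} [Fintype n] (ρ : A →⋆ₙₐ[ℂ] CStarMatrix n n ℂ) (u : A ⊗[ℂ] B) :
    ‖sliceMap B ρ u‖ ≤ osProjNorm NA NB u := by
  classical
  let E := CStarMatrix n n (Unitization ℂ B)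
  let := CStarAlgebra.spectralOrder (Unitization ℂ B)
  have := CStarAlgebra.spectralOrderedRing (Unitization ℂ B)
  let f : A →⋆ₙₐ[ℂ] E := (CStarMatrix.mapₙₐ
    (StarAlgHom.ofId ℂ (Unitization ℂ B) : ℂ →⋆ₙₐ[ℂ] Unitization ℂ B)).comp ρ
  let ε : CStarMatrix n n B →⋆ₙₐ[ℂ] E :=
    CStarMatrix.mapₙₐ (Unitization.inrNonUnitalStarAlgHom ℂ B)
  let g : B →⋆ₙₐ[ℂ] E := ε.comp (diagonalConst n B)
  have hε : Function.Injective ε := CStarMatrix.map_injective Unitization.inr_injective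
  have htmul (a : A) (b : B) : ε (sliceMap B ρ (a ⊗ₜ b)) = f a * g b := by
    refine CStarMatrix.ext fun i j ↦ ?_
    rw [CStarMatrix.mul_apply]
    change ((ρ a i j • b : B) : Unitization ℂ B) =
      ∑ k, algebraMap ℂ (Unitization ℂ B) (ρ a i k) *
        ((Matrix.diagonal (fun _ ↦ b) k j : B) : Unitization ℂ B)
    simp [Matrix.diagonal_apply, apply_ite, ← Algebra.smul_def]
  have hslice : ε (sliceMap B ρ u) =
      LinearMap.mul' ℂ E (TensorProduct.map (f : A →ₗ[ℂ] E) (g : B →ₗ[ℂ] E) u) := by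
    induction u with
    | zero => simp only [map_zero]
    | tmul a b => exact htmul a b
    | add u v hu hv => simp only [map_add, hu, hv]
  rw [← NonUnitalStarAlgHom.norm_map ε hε, hslice]
  exact norm_mul'_map_le_osProjNorm hNA hNB f g u

end OsProjNorm

/-- `S` and `T` are the commuting actions on `X` by left multiplication by the tensor factors:
`S a` is multiplication by `a ⊗ 1` and `T b` is multiplication by `1 ⊗ b`. -/
structure IsLeftMultiplierPair {A B X : Type*} [NonUnitalSemiring A] [Module ℂ A]
    [NonUnitalSemiring B] [Module ℂ B] [NonUnitalNormedRing X] [NormedSpace ℂ X]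
    (ι : A ⊗[ℂ] B →ₗ[ℂ] X) (S : A →ₙₐ[ℂ] (X →L[ℂ] X)) (T : B →ₙₐ[ℂ] (X →L[ℂ] X)) : Prop where
  apply_apply : ∀ a b y, S a (T b y) = ι (a ⊗ₜ b) * y
  apply_apply' : ∀ a b y, T b (S a y) = ι (a ⊗ₜ b) * y

namespace IsTensorCompletion

section Extension

variable {A B X : Type u} [NonUnitalRing A] [StarRing A] [Module ℂ A] [NonUnitalRing B]
  [StarRing B] [Module ℂ B] {ν : A ⊗[ℂ] B → ℝ} [NonUnitalNormedRing X] [StarRing X]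
  [NormedSpace ℂ X] [CompleteSpace X] {ι : A ⊗[ℂ] B →ₗ[ℂ] X} (hX : IsTensorCompletion ν X ι)

include hX

lemma continuousLinearMap_ext {Z : Type*} [TopologicalSpace Z] [T2Space Z] [AddCommMonoid Z]
    [Module ℂ Z] {F G : X →L[ℂ] Z} (h : ∀ a b, F (ι (a ⊗ₜ b)) = G (ι (a ⊗ₜ b))) : F = G := by
  refine ContinuousLinearMap.ext fun x ↦ hX.dense.induction_on x
    (isClosed_eq F.continuous G.continuous) fun u ↦ ?_
  induction u with
  | zero => simp only [map_zero]
  | tmul a b => exact h a b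
  | add u v hu hv => simp only [map_add, hu, hv]

lemma extendOfNorm_apply {Z : Type*} [NormedAddCommGroup Z] [NormedSpace ℂ Z] [CompleteSpace Z]
    {g : A ⊗[ℂ] B →ₗ[ℂ] Z} {C : ℝ} (hg : ∀ u, ‖g u‖ ≤ C * ν u) (u : A ⊗[ℂ] B) :
    g.extendOfNorm ι (ι u) = g u :=
  LinearMap.extendOfNorm_eq hX.dense ⟨C, fun u ↦ (hg u).trans_eq (by rw [hX.norm_eq])⟩ u

lemma exists_nonUnitalAlgHom [IsScalarTower ℂ X X] [SMulCommClass ℂ X X] {D : Type*}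
    [NonUnitalNormedRing D] [NormedSpace ℂ D] [IsScalarTower ℂ D D] [SMulCommClass ℂ D D]
    [CompleteSpace D] {g : A ⊗[ℂ] B →ₗ[ℂ] D} {C : ℝ} (hg : ∀ u, ‖g u‖ ≤ C * ν u)
    (hmul : ∀ a b c d, g ((a * c) ⊗ₜ (b * d)) = g (a ⊗ₜ b) * g (c ⊗ₜ d)) :
    ∃ G : X →ₙₐ[ℂ] D, Continuous G ∧ ∀ u, G (ι u) = g u := by
  let G : X →L[ℂ] D := g.extendOfNorm ι
  have hG (u : A ⊗[ℂ] B) : G (ι u) = g u := hX.extendOfNorm_apply hg u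
  have hmul_left (a : A) (b : B) (y : X) : G (ι (a ⊗ₜ b) * y) = G (ι (a ⊗ₜ b)) * G y := by
    refine congr($(hX.continuousLinearMap_ext (F := G ∘L .mul ℂ X (ι (a ⊗ₜ b)))
      (G := .mul ℂ D (G (ι (a ⊗ₜ b))) ∘L G) fun c d ↦ ?_) y)
    simp [hX.mul_tmul, hG, hmul]
  have hG_mul (x y : X) : G (x * y) = G x * G y :=
    congr($(hX.continuousLinearMap_ext (F := G ∘L (ContinuousLinearMap.mul ℂ X).flip y)
      (G := (ContinuousLinearMap.mul ℂ D).flip (G y) ∘L G) fun a b ↦ hmul_left a b y) x)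
  exact ⟨{ G with map_zero' := map_zero G, map_mul' := hG_mul }, G.continuous, hG⟩

lemma exists_nonUnitalAlgHom_operators {E : Type*} [NonUnitalNormedRing E] [NormedSpace ℂ E]
    (m : E →ₙₐ[ℂ] Module.End ℂ (A ⊗[ℂ] B)) (hm : ∀ e u, ν (m e u) ≤ ‖e‖ * ν u) :
    ∃ l : E →ₙₐ[ℂ] (X →L[ℂ] X), Continuous l ∧ ∀ e u, l e (ι u) = ι (m e u) := by
  have hm' (e : E) (u : A ⊗[ℂ] B) : ‖(ι ∘ₗ m e) u‖ ≤ ‖e‖ * ν u :=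
    (hX.norm_eq (m e u)).trans_le (hm e u)
  let l (e : E) : X →L[ℂ] X := (ι ∘ₗ m e).extendOfNorm ι
  have hl (e : E) (u : A ⊗[ℂ] B) : l e (ι u) = ι (m e u) := hX.extendOfNorm_apply (hm' e) u
  let L : E →ₙₐ[ℂ] (X →L[ℂ] X) :=
    { toFun := l
      map_zero' := hX.continuousLinearMap_ext fun a b ↦ by simp [hl]
      map_add' e f := hX.continuousLinearMap_ext fun a b ↦ by simp [hl]
      map_smul' c e := hX.continuousLinearMap_ext fun a b ↦ by simp [hl]
      map_mul' e f := hX.continuousLinearMap_ext fun a b ↦ by simp [hl] }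
  refine ⟨L, AddMonoidHomClass.continuous_of_bound L 1 fun e ↦ ?_, hl⟩
  rw [one_mul]
  exact LinearMap.opNorm_extendOfNorm_le hX.dense (norm_nonneg e) fun u ↦
    (hm' e u).trans_eq (by rw [hX.norm_eq])

end Extension

section OsProj

variable {A B X : Type u} [NonUnitalCStarAlgebra A] [PartialOrder A] [StarOrderedRing A]
  [NonUnitalCStarAlgebra B] [PartialOrder B] [StarOrderedRing B]
  {NA : ∀ p : ℕ, Matrix (Fin p) (Fin p) A → ℝ} {NB : ∀ q : ℕ, Matrix (Fin q) (Fin q) B → ℝ}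
  [NonUnitalNormedRing X] [StarRing X] [NormedSpace ℂ X] [CompleteSpace X]
  {ι : A ⊗[ℂ] B →ₗ[ℂ] X}
  (hX : IsTensorCompletion (osProjNorm NA NB) X ι)
  (hNA : ∀ p, IsCStarNorm (NA p)) (hNB : ∀ q, IsCStarNorm (NB q))

include hX hNA hNB

lemma exists_continuousLinearMap_matrix {n : Type*} [Fintype n] (a : n → n → A) :
    ∃ s : CStarMatrix n n B →L[ℂ] X, ∀ c, s c = ι (∑ i, ∑ j, a i j ⊗ₜ c i j) := by
  let f (i j : n) : B →L[ℂ] X := (ι ∘ₗ TensorProduct.mk ℂ A B (a i j)).mkContinuous ‖a i j‖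
    fun b ↦ (hX.norm_eq _).trans_le (osProjNorm_tmul_le hNA hNB (a i j) b)
  let entry (i j : n) : CStarMatrix n n B →L[ℂ] B := .proj j ∘L .proj i ∘L
    (CStarMatrix.ofMatrixL (m := n) (n := n) (A := B)).symm.toContinuousLinearMap
  refine ⟨∑ i, ∑ j, f i j ∘L entry i j, fun c ↦ ?_⟩
  simp only [sum_apply, map_sum]
  rfl

variable [IsScalarTower ℂ X X] [SMulCommClass ℂ X X]

lemma exists_isLeftMultiplierPair : ∃ (S : A →ₙₐ[ℂ] (X →L[ℂ] X)) (T : B →ₙₐ[ℂ] (X →L[ℂ] X)),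
    Continuous S ∧ Continuous T ∧ IsLeftMultiplierPair ι S T := by
  let mA : A →ₙₐ[ℂ] Module.End ℂ (A ⊗[ℂ] B) :=
    (Module.End.rTensorAlgHom ℂ A B : Module.End ℂ A →ₙₐ[ℂ] Module.End ℂ (A ⊗[ℂ] B)).comp
      (NonUnitalAlgHom.lmul ℂ A)
  let mB : B →ₙₐ[ℂ] Module.End ℂ (A ⊗[ℂ] B) :=
    (Module.End.lTensorAlgHom ℂ B A : Module.End ℂ B →ₙₐ[ℂ] Module.End ℂ (A ⊗[ℂ] B)).comp
      (NonUnitalAlgHom.lmul ℂ B)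
  obtain ⟨S, hScont, hS⟩ := hX.exists_nonUnitalAlgHom_operators mA
    (osProjNorm_rTensor_mulLeft_le hNA hNB)
  obtain ⟨T, hTcont, hT⟩ := hX.exists_nonUnitalAlgHom_operators mB
    (osProjNorm_lTensor_mulLeft_le hNA hNB)
  have hS_tmul (a c : A) (d : B) : S a (ι (c ⊗ₜ d)) = ι ((a * c) ⊗ₜ d) := hS a (c ⊗ₜ d)
  have hT_tmul (b d : B) (c : A) : T b (ι (c ⊗ₜ d)) = ι (c ⊗ₜ (b * d)) := hT b (c ⊗ₜ d)
  refine ⟨S, T, hScont, hTcont, fun a b y ↦ ?_, fun a b y ↦ ?_⟩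
  · refine congr($(hX.continuousLinearMap_ext (F := S a ∘L T b)
      (G := .mul ℂ X (ι (a ⊗ₜ b))) fun c d ↦ ?_) y)
    simp [hS_tmul, hT_tmul, hX.mul_tmul]
  · refine congr($(hX.continuousLinearMap_ext (F := T b ∘L S a)
      (G := .mul ℂ X (ι (a ⊗ₜ b))) fun c d ↦ ?_) y)
    simp [hS_tmul, hT_tmul, hX.mul_tmul]

lemma exists_nonUnitalAlgHom_matrix {n : Type*} [Fintype n]
    (ρ : A →⋆ₙₐ[ℂ] CStarMatrix n n ℂ) :
    ∃ Θ : X →ₙₐ[ℂ] CStarMatrix n n B, Continuous Θ ∧ ∀ u, Θ (ι u) = sliceMap B ρ u := by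
  refine hX.exists_nonUnitalAlgHom (C := 1)
    (fun u ↦ (norm_sliceMap_le hNA hNB ρ u).trans_eq (one_mul _).symm) fun a b c d ↦ ?_
  ext i j
  simp [sliceMap_tmul_apply, CStarMatrix.mul_apply, smul_mul_smul_comm, Finset.sum_smul]

end OsProj

end IsTensorCompletion

section AutomaticStarPreservation

variable {X C : Type*} [NonUnitalNormedRing X] [NormedSpace ℂ X] [CompleteSpace X]
  [IsScalarTower ℂ X X] [SMulCommClass ℂ X X]

lemma isQuasiregular_of_norm_lt_one {x : X} (hx : ‖x‖ < 1) : IsQuasiregular x := by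
  let e := WithLp.unitizationAlgEquiv ℂ (𝕜 := ℂ) (A := X)
  have he : ‖-e.symm (x : Unitization ℂ X)‖ < 1 :=
    (norm_neg _).trans_lt ((WithLp.unitization_norm_inr (𝕜 := ℂ) x).trans_lt hx)
  rw [isQuasiregular_iff_isUnit' ℂ, ← isUnit_map_iff e.symm]
  simpa using isUnit_one_sub_of_norm_lt_one he

variable [NonUnitalCStarAlgebra C]

lemma exists_not_isQuasiregular_neg_smul_star_mul_self {c : C} (hc : c ≠ 0) :
    ∃ μ : ℝ, ¬ IsQuasiregular (-(μ • (star c * c))) := by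
  obtain ⟨⟨s, hs, hs_norm⟩, -⟩ :=
    NonUnitalIsometricContinuousFunctionalCalculus.isGreatest_norm_quasispectrum (𝕜 := ℝ)
      (star c * c) (IsSelfAdjoint.star_mul_self c)
  have hs_ne : s ≠ 0 := norm_ne_zero_iff.mp <| by
    simpa [hs_norm, CStarRing.norm_star_mul_self] using hc
  exact ⟨s⁻¹, by simpa [Units.smul_def] using hs (IsUnit.mk0 s hs_ne)⟩

lemma isClosed_ker_of_surjective {Ψ : X →ₙ+* C} (hΨ : Function.Surjective Ψ) :
    IsClosed {x | Ψ x = 0} := by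
  refine isClosed_of_closure_subset fun z hz ↦ by_contra fun hne ↦ ?_
  obtain ⟨μ, hμ⟩ := exists_not_isQuasiregular_neg_smul_star_mul_self hne
  obtain ⟨w, hw⟩ := hΨ (-(μ • star (Ψ z)))
  obtain ⟨y, hy_norm, hy⟩ : ∃ y, ‖w * (z - y)‖ < 1 ∧ Ψ y = 0 := by
    have hopen : IsOpen {y | ‖w * (z - y)‖ < 1} := isOpen_lt (by fun_prop) continuous_const
    exact mem_closure_iff.mp hz _ hopen (by change ‖w * (z - z)‖ < 1; simp)
  refine hμ ?_
  have h := (isQuasiregular_of_norm_lt_one hy_norm).map Ψ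
  rwa [map_mul, map_sub, hy, sub_zero, hw, neg_mul, smul_mul_assoc] at h

lemma map_star_of_dense [StarRing X] {Θ : X →ₙ+* C} (hΘ : Continuous Θ) {s : C →+ X}
    (hs : Continuous s) (hΘs : ∀ c, Θ (s c) = c) {D : Set X} (hD : Dense D) (hsD : ∀ c, s c ∈ D)
    (hstar : ∀ x ∈ D, Θ (star x) = star (Θ x)) (x : X) : Θ (star x) = star (Θ x) := by
  let Ψ : X →ₙ+* C :=
    { toFun x := star (Θ (star x))
      map_zero' := by simp
      map_add' x y := by simp
      map_mul' x y := by simp }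
  have hΨD (x : X) (hx : x ∈ D) : Ψ x = Θ x := star_eq_iff_star_eq.mpr (hstar x hx).symm
  have hΨs (c : C) : Ψ (s c) = c := (hΨD _ (hsD c)).trans (hΘs c)
  have hker := isClosed_ker_of_surjective fun c ↦ ⟨s c, hΨs c⟩
  -- `Ψ` and `Θ` agree on `D`, so correcting `x - d` by a value of `s` lands in `ker Ψ`.
  have hcorrect (d : X) : Ψ (x - d - s (Ψ x - Θ x) - s (Θ (x - d))) = 0 :=
    hD.induction (P := fun d ↦ Ψ (x - d - s (Ψ x - Θ x) - s (Θ (x - d))) = 0)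
      (fun d hd ↦ by simp [hΨs, hΨD d hd]) (hker.preimage (by fun_prop)) d
  have h := hcorrect x
  rw [sub_self, map_zero, map_zero, sub_zero, zero_sub, map_neg, hΨs, neg_eq_zero, sub_eq_zero] at h
  exact (star_eq_iff_star_eq.mp h).symm

end AutomaticStarPreservation

section TransitiveLeftIdeals

/-- Left quasi-invertibility: `y + b + y * b = 0` says that `1 + y` is a left inverse of `1 + b`
in the unitization. -/
def HasLeftQuasiInverse {X : Type*} [NonUnitalNonAssocSemiring X] (b : X) : Prop :=
  ∃ y, y + b + y * b = 0

/-- A closed left ideal such that every nonzero vector of the quotient module is mapped onto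
every other one by an element of the algebra. -/
structure IsTransitiveLeftIdeal {X : Type*} [NonUnitalNormedRing X] [NormedSpace ℂ X]
    (L : Submodule ℂ X) : Prop where
  isClosed : IsClosed (L : Set X)
  mul_mem : ∀ x y, y ∈ L → x * y ∈ L
  exists_mul_sub_mem : ∀ x ∉ L, ∀ z, ∃ y, y * x - z ∈ L

variable {X : Type*} [NonUnitalNormedRing X] [NormedSpace ℂ X]

lemma span_one_add_inr_ne_top [IsScalarTower ℂ X X] [SMulCommClass ℂ X X] {b : X}
    (hb : ¬ HasLeftQuasiInverse b) : Ideal.span {(1 + b : Unitization ℂ X)} ≠ ⊤ := by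
  intro h
  rw [Ideal.eq_top_iff_one, Ideal.mem_span_singleton'] at h
  obtain ⟨y, hy⟩ := h
  have hfst : y.fst = 1 := by simpa using congr(($hy).fst)
  have hsnd : y.snd + b + y.snd * b = 0 := by
    simpa [hfst, add_assoc, add_comm, add_left_comm] using congr(($hy).snd)
  exact hb ⟨y.snd, hsnd⟩

lemma isClosed_preimage_inr_of_isMaximal [CompleteSpace X] [IsScalarTower ℂ X X]
    [SMulCommClass ℂ X X] {M : Ideal (Unitization ℂ X)} (hM : M.IsMaximal) :
    IsClosed {x : X | (x : Unitization ℂ X) ∈ M} := by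
  let e := WithLp.unitizationAlgEquiv ℂ (𝕜 := ℂ) (A := X)
  have : (M.comap e).IsMaximal := Ideal.comap_isMaximal_of_equiv e
  exact (Ideal.IsMaximal.isClosed (I := M.comap e)).preimage
    (WithLp.unitization_isometry_inr (𝕜 := ℂ) (A := X)).continuous

lemma exists_isTransitiveLeftIdeal [CompleteSpace X] [IsScalarTower ℂ X X] [SMulCommClass ℂ X X]
    {b : X} (hb : ¬ HasLeftQuasiInverse b) :
    ∃ L : Submodule ℂ X, IsTransitiveLeftIdeal L ∧ b ∉ L ∧ ∀ x, x + x * b ∈ L := by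
  obtain ⟨M, hM, hle⟩ := Ideal.exists_le_maximal _ (span_one_add_inr_ne_top hb)
  have hbM : (1 + b : Unitization ℂ X) ∈ M := hle (Ideal.mem_span_singleton_self _)
  have hmul (z : X) (y : Unitization ℂ X) : ((y.fst • z + z * y.snd : X) : Unitization ℂ X) =
      z * y := by ext <;> simp
  let L : Submodule ℂ X :=
    { carrier := {x | (x : Unitization ℂ X) ∈ M}
      zero_mem' := M.zero_mem
      add_mem' hx hy := by simpa using M.add_mem hx hy
      smul_mem' c x hx := by
        change ((c • x : X) : Unitization ℂ X) ∈ M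
        exact Unitization.inl_mul_inr c x ▸ M.mul_mem_left (Unitization.inl c) hx }
  refine ⟨L, ⟨isClosed_preimage_inr_of_isMaximal hM, fun x y hy ↦ ?_, fun x hx z ↦ ?_⟩,
    fun hbL ↦ ?_, fun x ↦ ?_⟩
  · change ((x * y : X) : Unitization ℂ X) ∈ M
    simpa using M.mul_mem_left (x : Unitization ℂ X) hy
  · obtain ⟨y, i, hi, hyi⟩ := hM.exists_inv hx
    refine ⟨y.fst • z + z * y.snd, ?_⟩
    change (((y.fst • z + z * y.snd) * x - z : X) : Unitization ℂ X) ∈ M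
    have hzi : z * y * (x : Unitization ℂ X) - z = -(z * i) := by
      rw [eq_sub_of_add_eq' hyi, mul_sub, mul_one, neg_sub, mul_assoc]
    rw [Unitization.inr_sub, Unitization.inr_mul, hmul, hzi]
    exact M.neg_mem (M.mul_mem_left _ hi)
  · refine hM.ne_top ((Ideal.eq_top_iff_one M).mpr ?_)
    simpa using M.sub_mem hbM hbL
  · change ((x + x * b : X) : Unitization ℂ X) ∈ M
    simpa [mul_add] using M.mul_mem_left (x : Unitization ℂ X) hbM

end TransitiveLeftIdeals

section QuotientRepresentation

variable {X : Type u} [NormedAddCommGroup X] [NormedSpace ℂ X]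

lemma norm_liftQL_le {Y : Type*} [SeminormedAddCommGroup Y] [NormedSpace ℂ Y]
    (L : Submodule ℂ X) (f : X →L[ℂ] Y) (hf : L ≤ f.ker) : ‖L.liftQL f hf‖ ≤ ‖f‖ := by
  let F : NormedAddGroupHom X Y :=
    f.toLinearMap.toAddMonoidHom.mkNormedAddGroupHom ‖f‖ f.le_opNorm
  have hF : ‖F‖ ≤ ‖f‖ := AddMonoidHom.mkNormedAddGroupHom_norm_le _ (norm_nonneg f) _
  refine ContinuousLinearMap.opNorm_le_bound _ (norm_nonneg f) fun x ↦ ?_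
  calc ‖L.liftQL f hf x‖ ≤ ‖F‖ * ‖x‖ :=
        QuotientAddGroup.norm_lift_apply_le (S := L.toAddSubgroup) F hf x
    _ ≤ ‖f‖ * ‖x‖ := by gcongr

lemma exists_quotientRepresentation {E : Type*} [NonUnitalNormedRing E] [NormedSpace ℂ E]
    {L : Submodule ℂ X} (hclosed : IsClosed (L : Set X)) {l : E →ₙₐ[ℂ] (X →L[ℂ] X)}
    (hl : Continuous l) (hL : ∀ e, ∀ x ∈ L, l e x ∈ L) :
    ∃ (V : Type u) (_ : NormedAddCommGroup V) (_ : NormedSpace ℂ V) (π : X →ₗ[ℂ] V)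
      (q : E →ₙₐ[ℂ] (V →L[ℂ] V)), Function.Surjective π ∧ (∀ x, π x = 0 ↔ x ∈ L) ∧
        Continuous q ∧ ∀ e x, q e (π x) = π (l e x) := by
  have hker (e : E) : L ≤ (L.mkQL ∘L l e).ker := fun x hx ↦ by simpa using hL e x hx
  let T (e : E) : X ⧸ L →L[ℂ] X ⧸ L := L.liftQL (L.mkQL ∘L l e) (hker e)
  have hT (e : E) (x : X) : T e (L.mkQ x) = L.mkQ (l e x) := rfl
  have hext {F G : X ⧸ L →L[ℂ] X ⧸ L} (h : ∀ x, F (L.mkQ x) = G (L.mkQ x)) : F = G :=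
    ContinuousLinearMap.ext (L.mkQ_surjective.forall.mpr h)
  let q : E →ₙₐ[ℂ] (X ⧸ L →L[ℂ] X ⧸ L) :=
    { toFun := T
      map_zero' := hext fun x ↦ by simp only [hT, map_zero, zero_apply]
      map_add' a c := hext fun x ↦ by simp only [hT, map_add, add_apply]
      map_smul' r a := hext fun x ↦ by
        simp only [hT, map_smul, smul_apply, MonoidHom.id_apply]
      map_mul' a c := hext fun x ↦ by simp only [hT, map_mul, mul_apply_eq_comp] }
  let l' : E →L[ℂ] X →L[ℂ] X := ⟨l, hl⟩
  refine ⟨X ⧸ L, inferInstance, inferInstance, L.mkQ, q, L.mkQ_surjective,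
    fun x ↦ Submodule.Quotient.mk_eq_zero L,
    AddMonoidHomClass.continuous_of_bound q ‖l'‖ fun e ↦ ?_, hT⟩
  calc ‖T e‖ ≤ ‖L.mkQL ∘L l e‖ := norm_liftQL_le L _ (hker e)
    _ ≤ ‖l e‖ := ContinuousLinearMap.opNorm_le_bound _ (norm_nonneg _) fun x ↦
      (Submodule.Quotient.norm_mk_le L (l e x)).trans ((l e).le_opNorm x)
    _ ≤ ‖l'‖ * ‖e‖ := l'.le_opNorm e

end QuotientRepresentation

section LeftMultipliersModuloLeftIdeal

lemma IsTransitiveLeftIdeal.mem_of_forall_mul_mem {X : Type*} [NonUnitalNormedRing X]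
    [NormedSpace ℂ X] {L : Submodule ℂ X} (hL : IsTransitiveLeftIdeal L) {y : X}
    (h : ∀ x, x * y ∈ L) : y ∈ L := by
  by_contra hy
  obtain ⟨x, hx⟩ := hL.exists_mul_sub_mem y hy y
  exact hy ((Submodule.sub_mem_iff_right L (h x)).mp hx)

variable {A B X : Type u} [NonUnitalRing A] [StarRing A] [Module ℂ A] [NonUnitalRing B]
  [StarRing B] [Module ℂ B] {ν : A ⊗[ℂ] B → ℝ} [NonUnitalNormedRing X] [StarRing X]
  [NormedSpace ℂ X] [CompleteSpace X] {ι : A ⊗[ℂ] B →ₗ[ℂ] X} {L : Submodule ℂ X}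

lemma IsTensorCompletion.apply_mem_of_isClosed (hX : IsTensorCompletion ν X ι)
    (hL : IsClosed (L : Set X)) {F : X →L[ℂ] X} (h : ∀ a b, F (ι (a ⊗ₜ b)) ∈ L) (x : X) :
    F x ∈ L := by
  have hF : L.mkQL ∘L F = 0 := hX.continuousLinearMap_ext fun a b ↦ by simpa using h a b
  simpa using congr($hF x)

variable [IsScalarTower ℂ X X] [SMulCommClass ℂ X X]
  {S : A →ₙₐ[ℂ] (X →L[ℂ] X)} {T : B →ₙₐ[ℂ] (X →L[ℂ] X)} (hST : IsLeftMultiplierPair ι S T)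
  (hX : IsTensorCompletion ν X ι) (hL : IsTransitiveLeftIdeal L)

include hST hX hL

lemma IsLeftMultiplierPair.apply_mem (a : A) {y : X} (hy : y ∈ L) : S a y ∈ L := by
  have hmul (x : X) : x * S a y ∈ L :=
    hX.apply_mem_of_isClosed hL.isClosed (F := (ContinuousLinearMap.mul ℂ X).flip (S a y))
      (fun c d ↦ by
        have h : ι (c ⊗ₜ d) * S a y = ι ((c * a) ⊗ₜ d) * y := by
          rw [← hST.apply_apply', ← hST.apply_apply', map_mul, mul_apply_eq_comp]
        simpa [h] using hL.mul_mem _ _ hy) x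
  exact hL.mem_of_forall_mul_mem hmul

lemma IsLeftMultiplierPair.exists_apply_notMem {b : X} (hb : b ∉ L) : ∃ a y, S a y ∉ L := by
  by_contra! h
  refine hb (hL.mem_of_forall_mul_mem fun x ↦ ?_)
  exact hX.apply_mem_of_isClosed hL.isClosed (F := (ContinuousLinearMap.mul ℂ X).flip b)
    (fun c d ↦ by simpa [← hST.apply_apply] using h c (T d b)) x

lemma IsLeftMultiplierPair.apply_mem_of_forall_apply_mul_mul_mem {r p : A}
    (h : ∀ c y, S (r * c * p) y ∈ L) {y : X} (hy : S p y ∉ L) (z : X) : S r z ∈ L := by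
  have hmul (x : X) : S r (x * S p y) ∈ L :=
    hX.apply_mem_of_isClosed hL.isClosed
      (F := S r ∘L (ContinuousLinearMap.mul ℂ X).flip (S p y)) (fun c d ↦ by
        have hcomm : T d (S p y) = S p (T d y) := by rw [hST.apply_apply', hST.apply_apply]
        have hrcp : S r (ι (c ⊗ₜ d) * S p y) = S (r * c * p) (T d y) := by
          rw [← hST.apply_apply, hcomm, map_mul, map_mul, mul_apply_eq_comp, mul_apply_eq_comp]
        simpa [hrcp] using h c (T d y)) x
  obtain ⟨x, hx⟩ := hL.exists_mul_sub_mem _ hy z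
  have hxz := hST.apply_mem hX hL r hx
  rw [map_sub] at hxz
  exact (Submodule.sub_mem_iff_right L (hmul x)).mp hxz

end LeftMultipliersModuloLeftIdeal

section IrreducibleModules

variable {A B X : Type u} [NonUnitalCStarAlgebra A] [PartialOrder A] [StarOrderedRing A]
  [NonUnitalRing B] [StarRing B] [Module ℂ B] {ν : A ⊗[ℂ] B → ℝ} [NonUnitalNormedRing X]
  [StarRing X] [NormedSpace ℂ X] [CompleteSpace X] [IsScalarTower ℂ X X] [SMulCommClass ℂ X X]
  {ι : A ⊗[ℂ] B →ₗ[ℂ] X} {S : A →ₙₐ[ℂ] (X →L[ℂ] X)} {T : B →ₙₐ[ℂ] (X →L[ℂ] X)}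
  {L : Submodule ℂ X}

lemma IsLeftMultiplierPair.exists_surjective_starAlgHom_matrix
    (hST : IsLeftMultiplierPair ι S T) (hS : Continuous S) (hX : IsTensorCompletion ν X ι)
    (hL : IsTransitiveLeftIdeal L) {b : X} (hb : b ∉ L) {n : ℕ} (hA : IrreducibleDimLE A n) :
    ∃ (k : ℕ) (ρ : A →⋆ₙₐ[ℂ] CStarMatrix (Fin k) (Fin k) ℂ), Function.Surjective ρ ∧
      ∀ a, ρ a = 0 → ∀ y, S a y ∈ L := by
  obtain ⟨V, _, _, π, q, hπ_surj, hπ, hq_cont, hq⟩ :=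
    exists_quotientRepresentation hL.isClosed hS fun a _ ↦ hST.apply_mem hX hL a
  have hq_eq_zero (a : A) : q a = 0 ↔ ∀ y, S a y ∈ L := by
    simp only [ContinuousLinearMap.ext_iff, hπ_surj.forall, hq, zero_apply, hπ]
  have hq_prime : IsPrimeHom q := fun r p hrp ↦ or_iff_not_imp_right.mpr fun hp ↦ by
    rw [hq_eq_zero, not_forall] at hp
    obtain ⟨y, hy⟩ := hp
    have hrp' (c : A) (y : X) : S (r * c * p) y ∈ L :=
      (hq_eq_zero _).mp (by rw [map_mul, map_mul, hrp]) y
    exact (hq_eq_zero r).mpr (hST.apply_mem_of_forall_apply_mul_mul_mem hX hL hrp' hy)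
  obtain ⟨a, y, hay⟩ := hST.exists_apply_notMem hX hL hb
  have hq_ne : q a ≠ 0 := fun h ↦ hay ((hq_eq_zero a).mp h y)
  obtain ⟨k, ρ, hρ, hker⟩ :=
    exists_surjective_starAlgHom_matrix_of_isPrimeHom hq_cont hq_prime ⟨a, hq_ne⟩ hA
  exact ⟨k, ρ, hρ, fun a ha ↦ (hq_eq_zero a).mp (hker a ha)⟩

end IrreducibleModules

section MatrixQuotients

lemma cstarMatrix_sum_apply {ι m n A : Type*} [AddCommMonoid A] (t : Finset ι)
    (c : ι → CStarMatrix m n A) (i : m) (j : n) : (∑ k ∈ t, c k) i j = ∑ k ∈ t, c k i j :=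
  Matrix.sum_apply i j t c

lemma exists_matrixUnit_lift {A n : Type*} [NonUnitalRing A] [StarRing A] [Module ℂ A]
    [Fintype n] [DecidableEq n] {ρ : A →⋆ₙₐ[ℂ] CStarMatrix n n ℂ} (hρ : Function.Surjective ρ) :
    ∃ a : n → n → A, ∀ i j k l, ρ (a i j) k l = Matrix.single i j 1 k l := by
  choose a ha using fun i j ↦ hρ (CStarMatrix.ofMatrix (Matrix.single i j 1))
  exact ⟨a, fun i j k l ↦ congr($(ha i j) k l)⟩

variable {A B X : Type u} [NonUnitalCStarAlgebra A] [PartialOrder A] [StarOrderedRing A]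
  [NonUnitalCStarAlgebra B] [PartialOrder B] [StarOrderedRing B]
  {NA : ∀ p : ℕ, Matrix (Fin p) (Fin p) A → ℝ} {NB : ∀ q : ℕ, Matrix (Fin q) (Fin q) B → ℝ}
  [NonUnitalNormedRing X] [StarRing X] [NormedSpace ℂ X] [CompleteSpace X]
  {ι : A ⊗[ℂ] B →ₗ[ℂ] X} (hX : IsTensorCompletion (osProjNorm NA NB) X ι)
  (hNA : ∀ p, IsCStarNorm (NA p)) (hNB : ∀ q, IsCStarNorm (NB q))

include hX hNA hNB

lemma IsTensorCompletion.exists_section_sliceMap {n : Type*} [Fintype n]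
    {ρ : A →⋆ₙₐ[ℂ] CStarMatrix n n ℂ} (hρ : Function.Surjective ρ) :
    ∃ s : CStarMatrix n n B →L[ℂ] X, (∀ c, ∃ u, s c = ι u ∧ sliceMap B ρ u = c) ∧
      ∀ a d, ∃ a', s (sliceMap B ρ (a ⊗ₜ d)) = ι (a' ⊗ₜ d) ∧ ρ a' = ρ a := by
  classical
  obtain ⟨e, he⟩ := exists_matrixUnit_lift hρ
  obtain ⟨s, hs⟩ := hX.exists_continuousLinearMap_matrix hNA hNB e
  refine ⟨s, fun c ↦ ⟨_, hs c, ?_⟩, fun a d ↦ ⟨∑ i, ∑ j, ρ a i j • e i j, ?_, ?_⟩⟩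
  · ext k l
    simp [cstarMatrix_sum_apply, sliceMap_tmul_apply, he, Matrix.single_apply, ite_and]
  · simp [hs, sliceMap_tmul_apply, TensorProduct.sum_tmul, TensorProduct.smul_tmul]
  · ext k l
    simp [cstarMatrix_sum_apply, he, Matrix.single_apply, ite_and]

variable [IsScalarTower ℂ X X] [SMulCommClass ℂ X X]

lemma IsTensorCompletion.exists_starAlgHom_matrix {n : Type*} [Fintype n]
    {ρ : A →⋆ₙₐ[ℂ] CStarMatrix n n ℂ} (hρ : Function.Surjective ρ) :
    ∃ (Θ : X →⋆ₙₐ[ℂ] CStarMatrix n n B) (s : CStarMatrix n n B →L[ℂ] X), Continuous Θ ∧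
      (∀ c, Θ (s c) = c) ∧ ∀ a d, ∃ a', s (Θ (ι (a ⊗ₜ d))) = ι (a' ⊗ₜ d) ∧ ρ a' = ρ a := by
  obtain ⟨Θ, hΘ_cont, hΘ⟩ := hX.exists_nonUnitalAlgHom_matrix hNA hNB ρ
  obtain ⟨s, hs, hs_tmul⟩ := hX.exists_section_sliceMap hNA hNB hρ
  have hΘs (c : CStarMatrix n n B) : Θ (s c) = c := by
    obtain ⟨u, hu, hc⟩ := hs c
    rw [hu, hΘ, hc]
  have hstar (u : A ⊗[ℂ] B) : Θ (star (ι u)) = star (Θ (ι u)) := by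
    induction u with
    | zero => simp
    | tmul a b =>
      rw [hX.star_tmul, hΘ, hΘ]
      ext i j
      simp [sliceMap_tmul_apply, map_star, CStarMatrix.star_apply]
    | add u v hu hv => simp only [map_add, star_add, hu, hv]
  have hΘ_star (x : X) : Θ (star x) = star (Θ x) :=
    map_star_of_dense (Θ := (Θ : X →ₙ+* CStarMatrix n n B)) hΘ_cont (s := (s : _ →+ X))
      s.continuous hΘs hX.dense (fun c ↦ (hs c).imp fun u hu ↦ hu.1.symm)
      (Set.forall_mem_range.mpr hstar) x
  refine ⟨{ Θ with map_star' := hΘ_star }, s, hΘ_cont, hΘs, fun a d ↦ ?_⟩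
  obtain ⟨a', hs', ha'⟩ := hs_tmul a d
  exact ⟨a', (congrArg s (hΘ _)).trans hs', ha'⟩

end MatrixQuotients

section QuasiInverses

variable {R : Type*} [NonUnitalRing R] {w y : R}

lemma add_add_mul_eq_zero_iff_equiv_mul_equiv_eq_one :
    y + w + y * w = 0 ↔ PreQuasiregular.equiv y * PreQuasiregular.equiv w = 1 := by
  rw [← PreQuasiregular.equiv.symm.injective.eq_iff, add_comm y w]
  rfl

lemma isQuasiregular_of_hasLeftQuasiInverse (h : y + w + y * w = 0)
    (hy : HasLeftQuasiInverse y) : IsQuasiregular w := by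
  obtain ⟨z, hz⟩ := hy
  rw [add_add_mul_eq_zero_iff_equiv_mul_equiv_eq_one] at h hz
  rw [isQuasiregular_iff']
  exact isUnit_iff_exists.mpr ⟨_, left_inv_eq_right_inv hz h ▸ hz, h⟩

lemma add_add_mul_eq_zero_comm (hw : IsQuasiregular w) (h : y + w + y * w = 0) :
    w + y + w * y = 0 := by
  rw [add_add_mul_eq_zero_iff_equiv_mul_equiv_eq_one] at h ⊢
  obtain ⟨z, hz, -⟩ := isUnit_iff_exists.mp (isQuasiregular_iff'.mp hw)
  rwa [left_inv_eq_right_inv h hz]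

end QuasiInverses

section SpectralInvariance

lemma quasispectrum_star_mul_self_subset {C : Type*} [NonUnitalCStarAlgebra C] (c : C) :
    quasispectrum ℂ (star c * c) ⊆ {z : ℂ | z.im = 0 ∧ 0 ≤ z.re} := by
  let := CStarAlgebra.spectralOrder C
  have := CStarAlgebra.spectralOrderedRing C
  intro z hz
  have hres := (IsSelfAdjoint.star_mul_self c).quasispectrumRestricts
  have him : z.im = 0 := by simpa using congr(($(hres.rightInvOn hz)).im).symm
  exact ⟨him, quasispectrum_nonneg_of_nonneg _ (star_mul_self_nonneg c) _ (hres.apply_mem hz)⟩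

variable {A B X : Type u} [NonUnitalCStarAlgebra A] [PartialOrder A] [StarOrderedRing A]
  [NonUnitalCStarAlgebra B] [PartialOrder B] [StarOrderedRing B]
  {NA : ∀ p : ℕ, Matrix (Fin p) (Fin p) A → ℝ} {NB : ∀ q : ℕ, Matrix (Fin q) (Fin q) B → ℝ}
  [NonUnitalNormedRing X] [StarRing X] [NormedSpace ℂ X] [CompleteSpace X]
  [IsScalarTower ℂ X X] [SMulCommClass ℂ X X] {ι : A ⊗[ℂ] B →ₗ[ℂ] X}
  (hX : IsTensorCompletion (osProjNorm NA NB) X ι)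
  (hNA : ∀ p, IsCStarNorm (NA p)) (hNB : ∀ q, IsCStarNorm (NB q))
  {n : ℕ} (hA : IrreducibleDimLE A n)

include hX hNA hNB hA

lemma IsTensorCompletion.exists_starAlgHom_matrix_mul_mem {L : Submodule ℂ X}
    (hL : IsTransitiveLeftIdeal L) {b : X} (hb : b ∉ L) :
    ∃ (k : ℕ) (Θ : X →⋆ₙₐ[ℂ] CStarMatrix (Fin k) (Fin k) B), Function.Surjective Θ ∧
      ∀ x y, Θ x = 0 → x * y ∈ L := by
  obtain ⟨S, T, hS, -, hST⟩ := hX.exists_isLeftMultiplierPair hNA hNB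
  obtain ⟨k, ρ, hρ, hker⟩ := hST.exists_surjective_starAlgHom_matrix hS hX hL hb hA
  obtain ⟨Θ, s, hΘ_cont, hΘs, hs⟩ := hX.exists_starAlgHom_matrix hNA hNB hρ
  refine ⟨k, Θ, fun c ↦ ⟨s c, hΘs c⟩, fun x y hx ↦ ?_⟩
  let Θ' : X →L[ℂ] CStarMatrix (Fin k) (Fin k) B :=
    { toFun := Θ, map_add' := map_add Θ, map_smul' := map_smul Θ, cont := hΘ_cont }
  let F : X →L[ℂ] X := (ContinuousLinearMap.mul ℂ X).flip y ∘L (.id ℂ X - s ∘L Θ')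
  have hF (x : X) : F x = (x - s (Θ x)) * y := rfl
  have hF_mem : F x ∈ L := hX.apply_mem_of_isClosed hL.isClosed (fun a d ↦ by
    obtain ⟨a', hs', ha'⟩ := hs a d
    rw [hF, hs', ← map_sub, ← TensorProduct.sub_tmul, ← hST.apply_apply]
    exact hker _ (by rw [map_sub, ha', sub_self]) _) x
  rwa [hF, hx, map_zero, sub_zero] at hF_mem

lemma IsTensorCompletion.exists_starAlgHom_matrix_not_hasLeftQuasiInverse {b : X}
    (hb : ¬ HasLeftQuasiInverse b) :
    ∃ (k : ℕ) (Θ : X →⋆ₙₐ[ℂ] CStarMatrix (Fin k) (Fin k) B), ¬ HasLeftQuasiInverse (Θ b) := by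
  obtain ⟨L, hL, hbL, hL_modular⟩ := exists_isTransitiveLeftIdeal hb
  obtain ⟨k, Θ, hΘ, hker⟩ := hX.exists_starAlgHom_matrix_mul_mem hNA hNB hA hL hbL
  refine ⟨k, Θ, fun ⟨c, hc⟩ ↦ hbL ?_⟩
  obtain ⟨y, rfl⟩ := hΘ c
  have hy_mul : (y + b + y * b) * b ∈ L := hker _ b (by rw [map_add, map_add, map_mul, hc])
  have hy : y + b + y * b ∈ L := (L.add_mem_iff_left hy_mul).mp (hL_modular _)
  rwa [add_right_comm, L.add_mem_iff_right (hL_modular y)] at hy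

lemma IsTensorCompletion.isQuasiregular_of_forall_starAlgHom_matrix {w : X}
    (hw : ∀ (k : ℕ) (Θ : X →⋆ₙₐ[ℂ] CStarMatrix (Fin k) (Fin k) B), IsQuasiregular (Θ w)) :
    IsQuasiregular w := by
  have hleft (b : X) (h : ∀ (k : ℕ) (Θ : X →⋆ₙₐ[ℂ] CStarMatrix (Fin k) (Fin k) B),
      HasLeftQuasiInverse (Θ b)) : HasLeftQuasiInverse b := by
    by_contra hb
    obtain ⟨k, Θ, hΘ⟩ := hX.exists_starAlgHom_matrix_not_hasLeftQuasiInverse hNA hNB hA hb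
    exact hΘ (h k Θ)
  obtain ⟨y, hy⟩ := hleft w fun k Θ ↦ by
    obtain ⟨c, -, hc⟩ := isQuasiregular_iff.mp (hw k Θ)
    exact ⟨c, by rwa [add_comm c]⟩
  refine isQuasiregular_of_hasLeftQuasiInverse hy (hleft y fun k Θ ↦ ⟨Θ w, ?_⟩)
  exact add_add_mul_eq_zero_comm (hw k Θ) (by rw [← map_mul, ← map_add, ← map_add, hy, map_zero])

lemma IsTensorCompletion.exists_mem_quasispectrum_starAlgHom_matrix {x : X} {z : ℂ} (hz0 : z ≠ 0)
    (hz : z ∈ quasispectrum ℂ x) :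
    ∃ (k : ℕ) (Θ : X →⋆ₙₐ[ℂ] CStarMatrix (Fin k) (Fin k) B), z ∈ quasispectrum ℂ (Θ x) := by
  by_contra! h
  refine hz (IsUnit.mk0 z hz0)
    (hX.isQuasiregular_of_forall_starAlgHom_matrix hNA hNB hA fun k Θ ↦ ?_)
  contrapose! h
  rw [map_neg, Units.smul_def, map_smul, ← Units.smul_def] at h
  exact ⟨k, Θ, quasispectrum.mem_of_not_quasiregular _ h⟩

end SpectralInvariance

/-- If `A` is a subhomogeneous C⋆-algebra, then for any C⋆-algebra `B`
the Banach `*`-algebra `A ⊗̂ B` is symmetric: every element of the form `x* x` has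
nonnegative (quasi)spectrum. -/
theorem osProjTensor_symmetric_of_subhomogeneous {A B X : Type u} [NonUnitalCStarAlgebra A] [NonUnitalCStarAlgebra B]
    [NonUnitalNormedRing X] [StarRing X] [NormedSpace ℂ X] [CompleteSpace X]
    [IsScalarTower ℂ X X] [SMulCommClass ℂ X X]
    (NA : ∀ p : ℕ, Matrix (Fin p) (Fin p) A → ℝ)
    (NB : ∀ q : ℕ, Matrix (Fin q) (Fin q) B → ℝ)
    (hNA : ∀ p, IsCStarNorm (NA p)) (hNB : ∀ q, IsCStarNorm (NB q))
    (ι : A ⊗[ℂ] B →ₗ[ℂ] X) (hX : IsTensorCompletion (osProjNorm NA NB) X ι)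
    (hA : IsSubhomogeneous A) :
    ∀ x : X, quasispectrum ℂ (star x * x) ⊆ {z : ℂ | z.im = 0 ∧ 0 ≤ z.re} := by
  let := CStarAlgebra.spectralOrder A
  have := CStarAlgebra.spectralOrderedRing A
  let := CStarAlgebra.spectralOrder B
  have := CStarAlgebra.spectralOrderedRing B
  obtain ⟨n, hn⟩ : ∃ n, IrreducibleDimLE A n := hA
  intro x z hz
  rcases eq_or_ne z 0 with rfl | hz0
  · simp
  obtain ⟨k, Θ, hΘ⟩ := hX.exists_mem_quasispectrum_starAlgHom_matrix hNA hNB hn hz0 hz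
  rw [map_mul, map_star] at hΘ
  exact quasispectrum_star_mul_self_subset (Θ x) hΘ
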